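/- arXiv:1904.05272 — 11 statements merged into one kernel-verified Lean document; each statement's English description precedes it below -/
import Mathlib

section
/- For the decentralized complete–S PICOD(t) problem with m messages and consecutive S = {s_min, s_min+1, …, s_max}, where 0 ≤ s_min ≤ s_max ≤ m−t, s_max ≥ 1, and (s_min, s_max) ≠ (m−t, m−t), the optimal normalized code-length is ℓ* = min{ s_max + t , m − s_min }. -/
/-!
**Converse.** A code induces a closure operator on the messages: `i` lies in the closure of `B`
when the transcript and the messages in `B` determine message `i`. Fixing the messages outside the
closure of `B` and those in `B`, the transcript still distinguishes all values of the remaining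
`|cl B| - |B|` messages, so this gain bounds the normalized length from below (`DecCode.gain_le`).
Validity implies that no closed set has size in `[smin, smax + t - 1]`: if `K` is closed with
`smin ≤ |K|`, a user whose side information is a subset of `K` of size `min smax |K|` decodes `t`
further messages, all of them in `K`.

What remains is purely combinatorial (`exists_gain`): a closure operator without closed sets of size
in `[s, u - 1]` has a set of gain at least `min u (m - s)`. If every independent set has at most `s`
elements, a minimal generating set has gain at least `m - s`. Otherwise take `X` independent with
`|X| = s + 1`. The sets `cl X ∩ ⋂ x ∈ T, cl (X \ {x})`, for nonempty `T ⊆ X`, are closed and meet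
`X` in `X \ T`, so their sizes control the number of common neighbours of `T` in the bipartite graph
between `X` and `cl X \ X` given by `y ∈ cl (X \ {x})`. If the gain of `X` were less than `u`, some
set `Y` of at most `s` elements of `cl X \ X` would have the property that no nonempty `T ⊆ X` has
exactly `|T| - 1` common neighbours in `Y`; but `card_le_card_of_common_ne` shows that this property
forces `|X| ≤ |Y|`.

**Achievability.** Either `smax + t` messages are sent uncoded, or a systematic Reed-Solomon scheme
is run on the first `n` messages, with `n = m` if `smin < smax` and `n = m - 1` if `smin = smax`
(`exists_mds`). Its `m - smin` transmissions each involve at most `smax` messages, so that some user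
can compute each of them, and every user recovers all `n` messages.
-/

open scoped BigOperators

/-- A decentralized (multi-round, zero-error) index code for `m` messages of `κ` bits each,
with users indexed by `ι` and side-information sets `A`.  The transcript map `X` sends the
message tuple `w` to the round-`τ` transmission, a tuple of `c τ` bits.  The field `causal`
expresses that the round-`τ` transmission is a function only of the side information of the
transmitting user `sender τ` and of the transmissions of the previous rounds. -/
structure DecCode (m κ : ℕ) {ι : Type*} (A : ι → Finset (Fin m)) where
  T : ℕ
  sender : Fin T → ι
  c : Fin T → ℕ
  X : (Fin m → Fin κ → Bool) → (τ : Fin T) → Fin (c τ) → Bool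
  causal : ∀ w w' : Fin m → Fin κ → Bool, ∀ τ : Fin T,
    (∀ i ∈ A (sender τ), w i = w' i) →
    (∀ τ' : Fin T, τ' < τ → X w τ' = X w' τ') →
    X w τ = X w' τ

namespace DecCode

variable {m κ : ℕ} {ι : Type*} {A : ι → Finset (Fin m)}

/-- A decentralized code is valid for PICOD(`t`) if every user `j` can decode, from the full
transcript and its own side information, some `t` messages not in its side information set. -/
def Valid (t : ℕ) (code : DecCode m κ A) : Prop :=
  ∀ j : ι, ∃ D : Finset (Fin m), Disjoint D (A j) ∧ D.card = t ∧
    ∃ dec : ((τ : Fin code.T) → Fin (code.c τ) → Bool) →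
        ((i : Fin m) → i ∈ A j → Fin κ → Bool) → (i : Fin m) → i ∈ D → Fin κ → Bool,
      ∀ w : Fin m → Fin κ → Bool, ∀ i : Fin m, ∀ hi : i ∈ D,
        dec (code.X w) (fun i _ => w i) i hi = w i

/-- Normalized length of a decentralized code: total number of transmitted bits over `κ`. -/
noncomputable def normLen (code : DecCode m κ A) : ℝ :=
  (∑ τ : Fin code.T, (code.c τ : ℝ)) / κ

end DecCode

/-- The user index type of the complete–`S` problem: one user for each subset of `[m]`
whose cardinality lies in `S`. -/
def CompleteS (m : ℕ) (S : Finset ℕ) := {B : Finset (Fin m) // B.card ∈ S}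

/-- Optimal normalized code-length `ℓ*` of the decentralized complete–`S` PICOD(`t`) problem:
the infimum, over all message lengths `κ ≥ 1` and all valid decentralized codes, of the
normalized length. -/
noncomputable def optLen (m t : ℕ) (S : Finset ℕ) : ℝ :=
  sInf { r : ℝ | ∃ κ : ℕ, 1 ≤ κ ∧
    ∃ code : DecCode m κ (fun B : CompleteS m S => B.val),
      code.Valid t ∧ r = code.normLen }

/-! ### A bipartite counting lemma -/

open Classical in
/-- If no nonempty set `T` of rows of a bipartite graph has exactly `|T| - 1` common neighbours,
then there are at least as many columns as rows. By induction, applied for each edge `x y` to the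
neighbours of `y` other than `x` and the neighbours of `x` other than `y`, one gets
`deg y ≤ deg x`. Summing `1 / deg` over all edges from both sides then yields the claim. -/
theorem card_le_card_of_common_ne {α β : Type*} (G : α → β → Prop) (X : Finset α) (Y : Finset β)
    (h : ∀ T ⊆ X, T.Nonempty → (Y.filter (fun y => ∀ x ∈ T, G x y)).card + 1 ≠ T.card) :
    X.card ≤ Y.card := by
  induction hn : X.card using Nat.strong_induction_on generalizing X Y with
  | _ n ih =>
  subst hn
  have hrow : ∀ x ∈ X, (Y.filter (fun y => G x y)).card ≠ 0 := by
    intro x hx h0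
    apply h {x} (by simpa using hx) (by simp)
    simpa using h0
  have hdeg : ∀ x ∈ X, ∀ y ∈ Y, G x y →
      (X.filter (fun z => G z y)).card ≤ (Y.filter (fun z => G x z)).card := by
    intro x hx y hy hxy
    have hxm : x ∈ X.filter (fun z => G z y) := by simp [hx, hxy]
    have hym : y ∈ Y.filter (fun z => G x z) := by simp [hy, hxy]
    have hc1 := Finset.card_erase_add_one hxm
    have hc2 := Finset.card_erase_add_one hym
    have hle : (X.filter (fun z => G z y)).card ≤ X.card := Finset.card_filter_le _ _
    have key := ih ((X.filter (fun z => G z y)).erase x).card (by omega)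
      ((X.filter (fun z => G z y)).erase x) ((Y.filter (fun z => G x z)).erase y) ?_ rfl
    · omega
    intro T hT _ hcard
    have hxT : x ∉ T := fun hx' => by simpa using hT hx'
    have hTy : ∀ z ∈ T, z ∈ X ∧ G z y := fun z hz => by
      have := hT hz
      simp at this
      exact this.2
    apply h (insert x T) _ (by simp)
    · rw [Finset.card_insert_of_notMem hxT, ← hcard]
      congr 1
      have : ((Y.filter (fun z => G x z)).erase y).filter (fun w => ∀ z ∈ T, G z w)
          = (Y.filter (fun w => ∀ z ∈ insert x T, G z w)).erase y := by
        ext w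
        simp only [Finset.mem_filter, Finset.mem_erase, Finset.forall_mem_insert]
        tauto
      rw [this, Finset.card_erase_add_one]
      simp only [Finset.mem_filter, Finset.forall_mem_insert]
      exact ⟨hy, hxy, fun z hz => (hTy z hz).2⟩
    · intro z hz
      rcases Finset.mem_insert.1 hz with rfl | hz
      · exact hx
      · exact (hTy z hz).1
  have hQ : (X.card : ℚ) ≤ Y.card := by
    calc (X.card : ℚ)
        = ∑ x ∈ X, ∑ y ∈ Y, if G x y then ((Y.filter (fun z => G x z)).card : ℚ)⁻¹ else 0 := by
          rw [Finset.card_eq_sum_ones]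
          push_cast
          refine Finset.sum_congr rfl fun x hx => ?_
          have h0 : ((Y.filter (fun z => G x z)).card : ℚ) ≠ 0 := by exact_mod_cast hrow x hx
          rw [← Finset.sum_filter, Finset.sum_const, nsmul_eq_mul, mul_inv_cancel₀ h0]
      _ ≤ ∑ x ∈ X, ∑ y ∈ Y, if G x y then ((X.filter (fun z => G z y)).card : ℚ)⁻¹ else 0 := by
          refine Finset.sum_le_sum fun x hx => Finset.sum_le_sum fun y hy => ?_
          split_ifs with hxy
          · have hpos : 0 < (X.filter (fun z => G z y)).card :=
              Finset.card_pos.2 ⟨x, by simp [hx, hxy]⟩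
            have := hdeg x hx y hy hxy
            gcongr
          · exact le_rfl
      _ = ∑ y ∈ Y, ∑ x ∈ X, if G x y then ((X.filter (fun z => G z y)).card : ℚ)⁻¹ else 0 :=
          Finset.sum_comm
      _ ≤ ∑ y ∈ Y, 1 := by
          refine Finset.sum_le_sum fun y _ => ?_
          rw [← Finset.sum_filter, Finset.sum_const, nsmul_eq_mul]
          exact mul_inv_le_one
      _ = Y.card := by simp
  exact_mod_cast hQ

/-! ### Closure operators whose closed sets avoid an interval of sizes -/

open Classical in
/-- A closure operator on a finite type without closed sets of size in `[s, u - 1]` has a set `A`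
with `|cl A| - |A| ≥ min u (|α| - s)`. -/
theorem exists_gain {α : Type*} [Fintype α] (cl : Finset α → Finset α)
    (hsub : ∀ A, A ⊆ cl A) (hmono : ∀ A B, A ⊆ B → cl A ⊆ cl B) (hidem : ∀ A, cl (cl A) = cl A)
    (s u : ℕ) (hsu : s < u)
    (hgap : ∀ K, cl K = K → s ≤ K.card → u ≤ K.card) :
    ∃ A, min u (Fintype.card α - s) + A.card ≤ (cl A).card := by
  by_cases hX : ∃ X : Finset α, X.card = s + 1 ∧ ∀ x ∈ X, x ∉ cl (X.erase x)
  · obtain ⟨X, hXc, hind⟩ := hX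
    refine ⟨X, ?_⟩
    suffices hY : u ≤ (cl X \ X).card by
      have := Finset.card_sdiff_add_card_eq_card (hsub X)
      omega
    by_contra! hlt
    -- The at most `u - 1 - s` columns outside `Y` are absorbed by the width of the gap `[s, u - 1]`.
    obtain ⟨Y, hYsub, hYc⟩ := Finset.exists_subset_card_eq
      (show min s (cl X \ X).card ≤ (cl X \ X).card from min_le_right _ _)
    have hfin : ¬ X.card ≤ Y.card := by omega
    apply hfin
    apply card_le_card_of_common_ne (fun x y => y ∈ cl (X.erase x)) X Y
    intro T hTX hTne hcard
    have hcard : (Y.filter fun y => ∀ x ∈ T, y ∈ cl (X.erase x)).card + 1 = T.card := by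
      convert hcard
    have hKcl : ∀ K : Finset α, (K = (cl X).filter fun y => ∀ x ∈ T, y ∈ cl (X.erase x)) →
        cl K = K := by
      intro K hK
      refine (hsub K).antisymm' fun y hy => ?_
      rw [hK, Finset.mem_filter]
      refine ⟨?_, fun x hx => ?_⟩
      · rw [← hidem X]
        exact hmono _ _ (by rw [hK]; exact Finset.filter_subset _ _) hy
      · rw [← hidem (X.erase x)]
        refine hmono _ _ ?_ hy
        intro z hz
        rw [hK, Finset.mem_filter] at hz
        exact hz.2 x hx
    have hgapK := hgap _ (hKcl _ rfl)
    set K := (cl X).filter fun y => ∀ x ∈ T, y ∈ cl (X.erase x) with hK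
    -- Independence of `X` gives `K ∩ X = X \ T`.
    have hsplit : K = (X \ T) ∪ (cl X \ X).filter fun y => ∀ x ∈ T, y ∈ cl (X.erase x) := by
      ext y
      simp only [hK, Finset.mem_filter, Finset.mem_union, Finset.mem_sdiff]
      constructor
      · rintro ⟨h1, h2⟩
        by_cases hy : y ∈ X
        · exact Or.inl ⟨hy, fun hyT => hind y hy (h2 y hyT)⟩
        · exact Or.inr ⟨⟨h1, hy⟩, h2⟩
      · rintro (⟨h1, h2⟩ | ⟨⟨h1, h2⟩, h3⟩)
        · refine ⟨hsub _ h1, fun x hx => hsub _ (Finset.mem_erase.2 ⟨?_, h1⟩)⟩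
          rintro rfl
          exact h2 hx
        · exact ⟨h1, h3⟩
    have hKc : K.card = (X \ T).card +
        ((cl X \ X).filter fun y => ∀ x ∈ T, y ∈ cl (X.erase x)).card := by
      rw [hsplit, Finset.card_union_of_disjoint]
      refine Finset.disjoint_left.2 fun y hy hy' => ?_
      simp only [Finset.mem_filter, Finset.mem_sdiff] at hy hy'
      exact hy'.1.2 hy.1
    have h1 := Finset.card_sdiff_add_card_eq_card hTX
    have h2 : (Y.filter fun y => ∀ x ∈ T, y ∈ cl (X.erase x)).card ≤
        ((cl X \ X).filter fun y => ∀ x ∈ T, y ∈ cl (X.erase x)).card :=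
      Finset.card_le_card (Finset.filter_subset_filter _ hYsub)
    have h3 : ((cl X \ X).filter fun y => ∀ x ∈ T, y ∈ cl (X.erase x)).card ≤
        (Y.filter fun y => ∀ x ∈ T, y ∈ cl (X.erase x)).card + ((cl X \ X) \ Y).card := by
      refine (Finset.card_le_card ?_).trans (Finset.card_union_le _ _)
      intro y hy
      simp only [Finset.mem_filter, Finset.mem_sdiff, Finset.mem_union] at hy ⊢
      tauto
    have h4 := Finset.card_sdiff_add_card_eq_card hYsub
    have h5 : (Y.filter fun y => ∀ x ∈ T, y ∈ cl (X.erase x)).card ≤ Y.card :=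
      Finset.card_filter_le _ _
    omega
  · push Not at hX
    obtain ⟨X, hXcl, hmin⟩ := Finset.exists_min_image
      (Finset.univ.filter fun X : Finset α => cl X = Finset.univ) Finset.card
      ⟨Finset.univ, by simpa using Finset.eq_univ_iff_forall.2 fun x => hsub _ (Finset.mem_univ x)⟩
    simp only [Finset.mem_filter, Finset.mem_univ, true_and] at hXcl hmin
    refine ⟨X, ?_⟩
    -- A minimal generating set is independent, as are its subsets.
    have hle : X.card ≤ s := by
      by_contra! hlt
      obtain ⟨Z, hZX, hZc⟩ := Finset.exists_subset_card_eq (Nat.succ_le_of_lt hlt)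
      obtain ⟨z, hz, hzcl⟩ := hX Z hZc
      have hzX : z ∈ cl (X.erase z) := hmono _ _ (Finset.erase_subset_erase _ hZX) hzcl
      have hXsub : X ⊆ cl (X.erase z) := by
        intro x hx
        by_cases hxz : x = z
        · exact hxz ▸ hzX
        · exact hsub _ (Finset.mem_erase.2 ⟨hxz, hx⟩)
      have huniv : cl (X.erase z) = Finset.univ := by
        rw [← Finset.univ_subset_iff, ← hXcl, ← hidem (X.erase z)]
        exact hmono _ _ hXsub
      have := hmin _ huniv
      have := Finset.card_erase_add_one (hZX hz)
      omega
    rw [hXcl, Finset.card_univ]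
    have := Finset.card_le_univ X
    omega

/-! ### The closure operator of a code and the lower bound -/

namespace DecCode

variable {m κ : ℕ} {ι : Type*} {A : ι → Finset (Fin m)}

open Classical in
/-- The messages determined by the transcript together with the messages in `B`. -/
noncomputable def closure (code : DecCode m κ A) (B : Finset (Fin m)) : Finset (Fin m) :=
  Finset.univ.filter fun i => ∀ w w' : Fin m → Fin κ → Bool,
    code.X w = code.X w' → (∀ a ∈ B, w a = w' a) → w i = w' i

theorem mem_closure (code : DecCode m κ A) {B : Finset (Fin m)} {i : Fin m} :
    i ∈ code.closure B ↔ ∀ w w' : Fin m → Fin κ → Bool,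
      code.X w = code.X w' → (∀ a ∈ B, w a = w' a) → w i = w' i := by
  simp [closure]

theorem subset_closure (code : DecCode m κ A) (B : Finset (Fin m)) : B ⊆ code.closure B :=
  fun i hi => code.mem_closure.2 fun _ _ _ h => h i hi

theorem closure_mono (code : DecCode m κ A) (B C : Finset (Fin m)) (h : B ⊆ C) :
    code.closure B ⊆ code.closure C :=
  fun _ hi => code.mem_closure.2 fun w w' hX hw =>
    code.mem_closure.1 hi w w' hX fun a ha => hw a (h ha)

theorem closure_idem (code : DecCode m κ A) (B : Finset (Fin m)) :
    code.closure (code.closure B) = code.closure B := by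
  refine (code.subset_closure _).antisymm' fun i hi => code.mem_closure.2 fun w w' hX hw => ?_
  exact code.mem_closure.1 hi w w' hX fun a ha => code.mem_closure.1 ha w w' hX hw

/-- Validity without decoders: a decoder exists as soon as the data it sees determine the
messages to be decoded. -/
theorem valid_iff (t : ℕ) (code : DecCode m κ A) :
    code.Valid t ↔ ∀ j, ∃ D : Finset (Fin m), Disjoint D (A j) ∧ D.card = t ∧
      D ⊆ code.closure (A j) := by
  classical
  refine forall_congr' fun j => exists_congr fun D => and_congr_right fun _ =>
    and_congr_right fun _ => ?_
  constructor
  · rintro ⟨dec, hdec⟩ i hi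
    refine code.mem_closure.2 fun w w' hX hw => ?_
    rw [← hdec w i hi, ← hdec w' i hi, hX]
    congr 1
    funext a ha
    exact hw a ha
  · intro hD
    refine ⟨fun x side i _ => if h : ∃ w : Fin m → Fin κ → Bool, code.X w = x ∧
      ∀ a (ha : a ∈ A j), w a = side a ha then h.choose i else fun _ => false, ?_⟩
    intro w i hi
    have h : ∃ v : Fin m → Fin κ → Bool, code.X v = code.X w ∧
      ∀ a (_ : a ∈ A j), v a = w a := ⟨w, rfl, fun _ _ => rfl⟩
    beta_reduce
    rw [dif_pos h]
    exact code.mem_closure.1 (hD hi) _ _ h.choose_spec.1 h.choose_spec.2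

/-- Setting to zero the messages in `B` and those outside its closure, the transcript is an
injective function of the remaining messages. -/
theorem gain_le (code : DecCode m κ A) (B : Finset (Fin m)) :
    κ * (code.closure B \ B).card ≤ ∑ τ, code.c τ := by
  classical
  let ext : ((code.closure B \ B : Finset (Fin m)) → Fin κ → Bool) → Fin m → Fin κ → Bool :=
    fun v i => if h : i ∈ code.closure B \ B then v ⟨i, h⟩ else fun _ => false
  have hinj : Function.Injective fun v => code.X (ext v) := by
    intro v v' hX
    funext ⟨i, hi⟩
    have := code.mem_closure.1 (Finset.mem_sdiff.1 hi).1 (ext v) (ext v') hX fun a ha => by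
      simp [ext, ha]
    simpa only [ext, dif_pos hi] using this
  have hcard := Fintype.card_le_of_injective _ hinj
  have hl : Fintype.card ((code.closure B \ B : Finset (Fin m)) → Fin κ → Bool) =
      2 ^ (κ * (code.closure B \ B).card) := by
    rw [Fintype.card_fun, Fintype.card_fun, Fintype.card_coe, Fintype.card_bool,
      Fintype.card_fin, pow_mul]
  have hr : Fintype.card ((τ : Fin code.T) → Fin (code.c τ) → Bool) = 2 ^ ∑ τ, code.c τ := by
    rw [Fintype.card_pi, ← Finset.prod_pow_eq_pow_sum]
    simp
  rw [hl, hr] at hcard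
  exact (Nat.pow_le_pow_iff_right one_lt_two).1 hcard

end DecCode

theorem le_normLen (m t smin smax κ : ℕ) (hκ : 1 ≤ κ) (ht : 1 ≤ t) (h1 : smin ≤ smax)
    (code : DecCode m κ (fun B : CompleteS m (Finset.Icc smin smax) => B.val))
    (hv : code.Valid t) : ((min (smax + t) (m - smin) : ℕ) : ℝ) ≤ code.normLen := by
  rw [DecCode.valid_iff] at hv
  obtain ⟨A, hA⟩ := exists_gain code.closure code.subset_closure code.closure_mono
    code.closure_idem smin (smax + t) (by omega) (by
      intro K hK hsK
      obtain ⟨B, hBK, hBc⟩ := Finset.exists_subset_card_eq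
        (show min smax K.card ≤ K.card from min_le_right _ _)
      obtain ⟨D, hDB, hDc, hD⟩ := hv ⟨B, Finset.mem_Icc.2 (by omega)⟩
      change Disjoint D B at hDB
      have hDK : D ⊆ K := hK ▸ hD.trans (code.closure_mono _ _ hBK)
      have hle := Finset.card_le_card (Finset.union_subset hDK hBK)
      rw [Finset.card_union_of_disjoint hDB] at hle
      omega)
  have hg := code.gain_le A
  have hs := Finset.card_sdiff_add_card_eq_card (code.subset_closure A)
  rw [Fintype.card_fin] at hA
  have hκ' : (0 : ℝ) < κ := by exact_mod_cast hκ
  rw [DecCode.normLen, le_div_iff₀ hκ']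
  have : min (smax + t) (m - smin) * κ ≤ ∑ τ, code.c τ := by
    rw [mul_comm]
    exact (Nat.mul_le_mul_left κ (by omega)).trans hg
  exact_mod_cast this

/-! ### Codes attaining the bound -/

theorem exists_user {m smin smax : ℕ} (h1 : smin ≤ smax) (h2 : smax ≤ m) (B : Finset (Fin m))
    (hB : B.card ≤ smax) : ∃ C : CompleteS m (Finset.Icc smin smax), B ⊆ C.val := by
  obtain ⟨C, hBC, hC⟩ := Finset.exists_superset_card_eq hB (by simpa using h2)
  exact ⟨⟨C, Finset.mem_Icc.2 (by omega)⟩, hBC⟩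

theorem card_filter_val_lt {m n : ℕ} (h : n ≤ m) :
    (Finset.univ.filter fun i : Fin m => i.val < n).card = n := by
  rw [Fin.card_filter_val_lt]; omega

/-- Sending the first `smax + t` messages uncoded: any user lacks at least `t` of them. -/
theorem exists_uncoded (m t smin smax : ℕ) (h1 : smin ≤ smax) (h2 : smax + t ≤ m)
    (h3 : 1 ≤ smax) :
    ∃ code : DecCode m 1 (fun B : CompleteS m (Finset.Icc smin smax) => B.val),
      code.Valid t ∧ ((smax + t : ℕ) : ℝ) = code.normLen := by
  classical
  have hu : ∀ τ : Fin (smax + t), ∃ C : CompleteS m (Finset.Icc smin smax),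
      Fin.castLE h2 τ ∈ C.val := fun τ => by
    obtain ⟨C, hC⟩ := exists_user h1 (by omega : smax ≤ m) {Fin.castLE h2 τ} (by simpa using h3)
    exact ⟨C, hC (by simp)⟩
  choose u hu using hu
  refine ⟨⟨smax + t, u, fun _ => 1, fun w τ => w (Fin.castLE h2 τ),
    fun w w' τ h _ => h _ (hu τ)⟩, ?_, by simp [DecCode.normLen]⟩
  rw [DecCode.valid_iff]
  rintro ⟨B, hB⟩
  rw [Finset.mem_Icc] at hB
  have hc := card_filter_val_lt h2
  have hle := Finset.le_card_sdiff B (Finset.univ.filter fun i : Fin m => i.val < smax + t)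
  obtain ⟨D, hD, hDc⟩ := Finset.exists_subset_card_eq (show t ≤ _ by omega : t ≤
    ((Finset.univ.filter fun i : Fin m => i.val < smax + t) \ B).card)
  refine ⟨D, Finset.disjoint_left.2 fun i hi => (Finset.mem_sdiff.1 (hD hi)).2, hDc, ?_⟩
  intro i hi
  have hi' := hD hi
  simp only [Finset.mem_sdiff, Finset.mem_filter, Finset.mem_univ, true_and] at hi'
  exact DecCode.mem_closure _ |>.2 fun w w' hX _ => congrFun hX ⟨i, hi'.1⟩

/-- A systematic Reed-Solomon scheme on the first `n` messages, viewed as elements of the field with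
`2 ^ m` elements. The last `s` of them are the values of a polynomial `p` of degree less than `s`
at distinct points; for each other message `i < n - s` the difference between the message and the
value of `p` at its point is sent, a function of `s + 1` messages. A user having `s` of the `n`
messages knows `s` values of `p`, hence `p`, hence all `n` messages. -/
theorem exists_mds (m t smin smax s n : ℕ) (hm : 1 ≤ m) (h1 : smin ≤ smax) (h2 : smax ≤ m)
    (hn : n ≤ m) (hsn : s ≤ n) (hs : s + 1 ≤ smax) (hsmin : s + (m - n) ≤ smin)
    (hdec : smax + t ≤ n) :
    ∃ code : DecCode m m (fun B : CompleteS m (Finset.Icc smin smax) => B.val),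
      code.Valid t ∧ ((n - s : ℕ) : ℝ) = code.normLen := by
  classical
  have hK : Nat.card (Fin m → Bool) = Nat.card (GaloisField 2 m) := by
    rw [GaloisField.card 2 m (by omega)]; simp
  have : Finite (GaloisField 2 m) := inferInstance
  let φ : (Fin m → Bool) ≃ GaloisField 2 m := (Finite.card_eq.1 hK).some
  have : Fintype (GaloisField 2 m) := Fintype.ofFinite _
  obtain ⟨a⟩ : Nonempty (Fin m ↪ GaloisField 2 m) := by
    apply Function.Embedding.nonempty_of_card_le
    rw [← Nat.card_eq_fintype_card, ← Nat.card_eq_fintype_card, GaloisField.card 2 m (by omega)]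
    simpa using Nat.lt_two_pow_self.le
  let N : Finset (Fin m) := Finset.univ.filter fun i => n - s ≤ i.val ∧ i.val < n
  have hNc : N.card = s := by
    have hN : N = (Finset.univ.filter fun i : Fin m => i.val < n) \
        (Finset.univ.filter fun i : Fin m => i.val < n - s) := by
      ext i; simp [N]; omega
    rw [hN, Finset.card_sdiff_of_subset, card_filter_val_lt hn, card_filter_val_lt (by omega)]
    · omega
    · intro i; simp; omega
  let p : (Fin m → Fin m → Bool) → Polynomial (GaloisField 2 m) :=
    fun w => Lagrange.interpolate N a fun i => φ (w i)
  have hpdeg : ∀ w, (p w).degree < s := fun w =>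
    hNc ▸ Lagrange.degree_interpolate_lt (fun i => φ (w i)) a.injective.injOn
  have hpeval : ∀ w, ∀ i ∈ N, (p w).eval (a i) = φ (w i) := fun w i hi =>
    Lagrange.eval_interpolate_at_node (fun i => φ (w i)) a.injective.injOn hi
  have hk : n - s ≤ m := by omega
  have hu : ∀ τ : Fin (n - s), ∃ C : CompleteS m (Finset.Icc smin smax),
      insert (Fin.castLE hk τ) N ⊆ C.val := fun τ =>
    exists_user h1 h2 _ ((Finset.card_insert_le _ _).trans (by omega))
  choose u hu using hu
  refine ⟨⟨n - s, u, fun _ => m,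
    fun w τ => φ.symm (φ (w (Fin.castLE hk τ)) - (p w).eval (a (Fin.castLE hk τ))), ?_⟩, ?_, ?_⟩
  · intro w w' τ h _
    have hp : p w = p w' := Lagrange.interpolate_eq_of_values_eq_on _ _ fun i hi => by
      rw [h i (hu τ (Finset.mem_insert_of_mem hi))]
    rw [hp, h _ (hu τ (Finset.mem_insert_self _ _))]
  · rw [DecCode.valid_iff]
    rintro ⟨B, hB⟩
    rw [Finset.mem_Icc] at hB
    set F := Finset.univ.filter fun i : Fin m => i.val < n with hF
    have hc : F.card = n := card_filter_val_lt hn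
    have hle := Finset.le_card_sdiff B F
    obtain ⟨D, hD, hDc⟩ := Finset.exists_subset_card_eq (show t ≤ (F \ B).card by omega)
    refine ⟨D, Finset.disjoint_left.2 fun i hi => (Finset.mem_sdiff.1 (hD hi)).2, hDc, ?_⟩
    intro i hi
    have hi' := (Finset.mem_sdiff.1 (hD hi)).1
    refine (DecCode.mem_closure _).2 fun w w' hX hw => ?_
    have hX' : ∀ j : Fin m, j.val < n - s →
        φ (w j) - (p w).eval (a j) = φ (w' j) - (p w').eval (a j) := fun j hj =>
      φ.symm.injective (congrFun hX ⟨j, hj⟩)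
    -- At most `m - n` of the at least `smin` known messages lie outside the first `n`.
    have hBF : s ≤ (B ∩ F).card := by
      have e1 := Finset.card_union_add_card_inter B F
      have e2 := Finset.card_le_univ (B ∪ F)
      rw [Fintype.card_fin] at e2
      omega
    have hp : p w = p w' := by
      have hlt : (s : WithBot ℕ) ≤ ((B ∩ F).card : WithBot ℕ) := by exact_mod_cast hBF
      refine Polynomial.eq_of_degrees_lt_of_eval_index_eq (B ∩ F) a.injective.injOn
        ((hpdeg w).trans_le hlt) ((hpdeg w').trans_le hlt) fun j hj => ?_
      obtain ⟨hjB, hjF⟩ := Finset.mem_inter.1 hj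
      rw [hF, Finset.mem_filter] at hjF
      by_cases hjk : j.val < n - s
      · have := hX' j hjk
        rw [hw j hjB] at this
        exact sub_right_injective this
      · have hjN : j ∈ N := by simp [N]; omega
        rw [hpeval _ _ hjN, hpeval _ _ hjN, hw j hjB]
    apply φ.injective
    rw [hF, Finset.mem_filter] at hi'
    by_cases hik : i.val < n - s
    · have := hX' i hik
      rw [hp] at this
      exact sub_left_injective this
    · have hiN : i ∈ N := by simp [N]; omega
      rw [← hpeval _ _ hiN, ← hpeval _ _ hiN, hp]
  · have : (m : ℝ) ≠ 0 := by exact_mod_cast (by omega : m ≠ 0)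
    simp [DecCode.normLen, this]

/-- Theorem 1, non-degenerate cases: for the decentralized complete–`S`
PICOD(`t`) problem with `m` messages and consecutive `S = [smin : smax]`, with
`0 ≤ smin ≤ smax ≤ m - t`, `smax ≥ 1` and `(smin, smax) ≠ (m - t, m - t)`, the optimal
normalized code-length is `min (smax + t) (m - smin)`. -/
theorem decentralized_picod_consecutive (m t smin smax : ℕ)
    (hm : 1 ≤ m) (ht : 1 ≤ t)
    (h1 : smin ≤ smax) (h2 : smax ≤ m - t) (h3 : 1 ≤ smax)
    (h4 : (smin, smax) ≠ (m - t, m - t)) :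
    optLen m t (Finset.Icc smin smax) = ((min (smax + t) (m - smin) : ℕ) : ℝ) := by
  refine IsLeast.csInf_eq ⟨?_, ?_⟩
  · rcases le_total (smax + t) (m - smin) with h | h
    · rw [min_eq_left h]
      exact ⟨1, le_rfl, exists_uncoded m t smin smax h1 (by omega) h3⟩
    · rw [min_eq_right h]
      refine ⟨m, hm, ?_⟩
      rcases h1.lt_or_eq with hlt | rfl
      · exact exists_mds m t smin smax smin m hm h1 (by omega) le_rfl (by omega) (by omega)
          (by omega) (by omega)
      · have hne : smin ≠ m - t := fun h => h4 (by rw [← h])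
        have := exists_mds m t smin smin (smin - 1) (m - 1) hm h1 (by omega) (by omega) (by omega)
          (by omega) (by omega) (by omega)
        rwa [show m - 1 - (smin - 1) = m - smin by omega] at this
  · rintro r ⟨κ, hκ, code, hv, rfl⟩
    exact le_normLen m t smin smax κ hκ ht h1 code hv
end

section
/- For the decentralized complete–S PICOD(t) problem with m messages and S = {m−t}, where 1 ≤ t ≤ m−1, the optimal normalized code-length is ℓ* = t · C(m, m−t) / (C(m, m−t) − 1), where C(m, m−t) is the binomial coefficient (the number of users). -/
/-! Every user misses exactly `t` messages, so it has to recover all of them.  Write `N` for the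
number of users.

Converse: once the side information of user `j` is fixed, its own transmissions are determined by
those of the other users, even across interactive rounds.  Hence the transmissions of the other
users determine the `t` missing messages and carry at least `t * κ` bits (`le_others`).  Summing
over `j`, each round is counted `N - 1` times, so `N * t * κ ≤ (N - 1) * ∑ c`.

Achievability: split every message into `N - 1` symbols of a field `𝔽_{2^k}`, and let every user
send `t` linear combinations of the symbols it knows.  User `j` sees `t * (N - 1)` equations in
`t * (N - 1)` unknowns, and needs the corresponding matrix, in which user `i` has a structural zero
at message `l` whenever `l ∉ A i`, to be invertible.  The generic matrix with these zeros has
nonzero determinant as soon as there is a perfect matching between equations and unknowns that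
avoids the zeros (`exists_coeffs`), and a large enough field then has a specialization that works
for all users simultaneously.  The matching (`exists_matching`) comes from Hall's theorem
applied to a doubly stochastic weight: user `i ≠ j` spreads its weight evenly over `A i \ A j`,
which is nonempty because `A i` and `A j` are distinct sets of the same size, and all messages
outside `A j` receive the same weight because transpositions of them permute the users. -/


open scoped BigOperators

/-! ### Converse -/

/-- A user knowing `A j` and recovering all the other messages forces the remaining users to send
at least as many bits as it misses. -/
lemma le_others {m κ t : ℕ} {ι : Type*} [DecidableEq ι] {A : ι → Finset (Fin m)}
    (htm : t ≤ m) (hA : ∀ j, (A j).card = m - t) (code : DecCode m κ A) (hv : code.Valid t) (j : ι) :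
    t * κ ≤ ∑ τ : Fin code.T, if code.sender τ = j then 0 else code.c τ := by
  obtain ⟨D, hD, hDc, dec, hdec⟩ := hv j
  have hDeq : D = (A j)ᶜ := by
    apply Finset.eq_of_subset_of_card_le
    · intro i hi
      exact Finset.mem_compl.2 (Finset.disjoint_left.1 hD hi)
    · rw [Finset.card_compl, hA, Fintype.card_fin, hDc]; omega
  -- Messages that vanish on `A j`, parametrized by their values on `D`.
  let ext : ({i // i ∈ D} → Fin κ → Bool) → (Fin m → Fin κ → Bool) :=
    fun u i => if h : i ∈ D then u ⟨i, h⟩ else fun _ => false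
  let g : ({i // i ∈ D} → Fin κ → Bool) →
      ((τ : {τ : Fin code.T // code.sender τ ≠ j}) → Fin (code.c τ) → Bool) :=
    fun u τ => code.X (ext u) τ
  have hext : ∀ u u', ∀ i ∈ A j, ext u i = ext u' i := by
    intro u u' i hi
    have : i ∉ D := by rw [hDeq]; simpa using hi
    simp [ext, this]
  have hg : Function.Injective g := by
    intro u u' h
    have hX : ∀ n : ℕ, ∀ τ : Fin code.T, τ.val = n → code.X (ext u) τ = code.X (ext u') τ := by
      intro n
      -- By causality, agreement on the rounds of the other users propagates to those of `j`.
      induction n using Nat.strong_induction_on with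
      | _ n ih =>
        intro τ hτ
        by_cases hs : code.sender τ = j
        · refine code.causal _ _ τ (by rw [hs]; exact hext u u') fun τ' hlt => ?_
          exact ih τ'.val (by rw [← hτ]; exact hlt) τ' rfl
        · exact congrFun h ⟨τ, hs⟩
    have hX' : code.X (ext u) = code.X (ext u') := funext fun τ => hX _ τ rfl
    have hside : (fun (i : Fin m) (_ : i ∈ A j) => ext u i) = fun i _ => ext u' i := by
      funext i hi; exact hext u u' i hi
    funext ⟨i, hi⟩
    have h1 := hdec (ext u) i hi
    have h2 := hdec (ext u') i hi
    rw [hX', hside] at h1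
    have := h1.symm.trans h2
    simpa [ext, hi] using this
  have hcard := Fintype.card_le_of_injective g hg
  simp only [Fintype.card_pi, Fintype.card_bool, Fintype.card_fin,
    Finset.prod_const, Finset.card_univ, Fintype.card_coe, hDc, Finset.prod_pow_eq_pow_sum] at hcard
  rw [← pow_mul, Nat.pow_le_pow_iff_right (by norm_num)] at hcard
  have hsum : ∑ τ : {τ : Fin code.T // code.sender τ ≠ j}, code.c τ
      = ∑ τ : Fin code.T, if code.sender τ = j then 0 else code.c τ := by
    rw [← Finset.sum_subtype (Finset.univ.filter fun τ => code.sender τ ≠ j) (by simp) code.c,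
      Finset.sum_filter]
    exact Finset.sum_congr rfl fun τ _ => by split_ifs <;> simp_all
  rw [← hsum, mul_comm]
  exact hcard

/-- Averaging `le_others` over the users. -/
lemma converse {m κ t : ℕ} {ι : Type*} [Fintype ι] {A : ι → Finset (Fin m)}
    (htm : t ≤ m) (hA : ∀ j, (A j).card = m - t) (hN : 2 ≤ Fintype.card ι) (hκ : 1 ≤ κ)
    (code : DecCode m κ A) (hv : code.Valid t) :
    (t : ℝ) * Fintype.card ι / ((Fintype.card ι : ℝ) - 1) ≤ code.normLen := by
  classical
  have h1 : ∑ _j : ι, t * κ ≤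
      ∑ j : ι, ∑ τ : Fin code.T, if code.sender τ = j then 0 else code.c τ :=
    Finset.sum_le_sum fun j _ => le_others htm hA code hv j
  rw [Finset.sum_comm] at h1
  have h2 : ∀ τ : Fin code.T, (∑ j : ι, if code.sender τ = j then 0 else code.c τ)
      + code.c τ = Fintype.card ι * code.c τ := by
    intro τ
    have : code.c τ = ∑ j : ι, if code.sender τ = j then code.c τ else 0 := by simp
    calc _ = (∑ j : ι, if code.sender τ = j then 0 else code.c τ)
          + ∑ j : ι, (if code.sender τ = j then code.c τ else 0) := by rw [← this]
      _ = ∑ _j : ι, code.c τ := by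
          rw [← Finset.sum_add_distrib]
          exact Finset.sum_congr rfl fun j _ => by split_ifs <;> simp
      _ = _ := by simp
  have h3 : Fintype.card ι * (t * κ) + ∑ τ, code.c τ ≤ Fintype.card ι * ∑ τ, code.c τ := by
    rw [Finset.mul_sum, ← Finset.sum_congr rfl fun τ _ => h2 τ, Finset.sum_add_distrib]
    simpa using h1
  have h3' : (Fintype.card ι : ℝ) * (t * κ) + ∑ τ, (code.c τ : ℝ)
      ≤ Fintype.card ι * ∑ τ, (code.c τ : ℝ) := by exact_mod_cast h3
  have hN' : (2 : ℝ) ≤ Fintype.card ι := by exact_mod_cast hN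
  have hκ' : (0 : ℝ) < κ := by exact_mod_cast hκ
  unfold DecCode.normLen
  rw [div_le_div_iff₀ (by linarith) hκ']
  linarith

/-! ### Matchings -/

/-- Hall's theorem for fractional matchings. -/
lemma exists_injective_of_weight {R C : Type*} [Fintype R] [Fintype C] [DecidableEq C]
    (W : R → C → ℚ) (h0 : ∀ r c, 0 ≤ W r c) (hr : ∀ r, ∑ c, W r c = 1) (hc : ∀ c, ∑ r, W r c ≤ 1) :
    ∃ f : R → C, Function.Injective f ∧ ∀ r, W r (f r) ≠ 0 := by
  have := (Finset.all_card_le_biUnion_card_iff_exists_injective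
    (fun r => Finset.univ.filter fun c => W r c ≠ 0)).1 ?_
  · simpa using this
  · intro s
    have : (s.card : ℚ) ≤ ((s.biUnion fun r => Finset.univ.filter fun c => W r c ≠ 0).card : ℚ) := by
      calc (s.card : ℚ) = ∑ r ∈ s, ∑ c, W r c := by simp [hr]
        _ = ∑ r ∈ s, ∑ c ∈ s.biUnion fun r => Finset.univ.filter fun c => W r c ≠ 0, W r c := by
            refine Finset.sum_congr rfl fun r hrs => (Finset.sum_subset (Finset.subset_univ _) ?_).symm
            intro c _ hcn
            by_contra hne
            exact hcn (Finset.mem_biUnion.2 ⟨r, hrs, by simpa using hne⟩)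
        _ = ∑ c ∈ s.biUnion fun r => Finset.univ.filter fun c => W r c ≠ 0, ∑ r ∈ s, W r c :=
            Finset.sum_comm
        _ ≤ ∑ c ∈ s.biUnion fun r => Finset.univ.filter fun c => W r c ≠ 0, (1 : ℚ) := by
            refine Finset.sum_le_sum fun c _ => le_trans ?_ (hc c)
            exact Finset.sum_le_sum_of_subset_of_nonneg (Finset.subset_univ _) fun r _ _ => h0 r c
        _ = _ := by simp
    exact_mod_cast this

lemma row_sum {m a : ℕ} (i j : {B : Finset (Fin m) // B.card = a}) :
    ∑ l ∈ j.1ᶜ, (if l ∈ i.1 then ((i.1 \ j.1).card : ℚ)⁻¹ else 0) = 1 - if i = j then 1 else 0 := by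
  have hfil : (j.1ᶜ.filter fun l => l ∈ i.1) = i.1 \ j.1 := by
    ext x; simp [and_comm]
  rw [← Finset.sum_filter, hfil, Finset.sum_const, nsmul_eq_mul]
  by_cases hij : i = j
  · simp [hij]
  · have hne : (i.1 \ j.1).card ≠ 0 := by
      intro h0
      rw [Finset.card_eq_zero, Finset.sdiff_eq_empty_iff_subset] at h0
      exact hij (Subtype.ext (Finset.eq_of_subset_of_card_le h0 (by rw [i.2, j.2])))
    have hne' : ((i.1 \ j.1).card : ℚ) ≠ 0 := by exact_mod_cast hne
    rw [mul_inv_cancel₀ hne']; simp [hij]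

/-- If each user `i` spreads unit weight evenly over `i \ j`, every message outside `j`
receives the same total, namely `(N - 1) / t`. -/
lemma column_sum {m a : ℕ} (j : {B : Finset (Fin m) // B.card = a}) (l : Fin m) (hl : l ∉ j.1) :
    ((m - a : ℕ) : ℚ) * ∑ i : {B : Finset (Fin m) // B.card = a},
      (if l ∈ i.1 then ((i.1 \ j.1).card : ℚ)⁻¹ else 0)
      = (Fintype.card {B : Finset (Fin m) // B.card = a} : ℚ) - 1 := by
  set f : Fin m → ℚ := fun l => ∑ i : {B : Finset (Fin m) // B.card = a},
      (if l ∈ i.1 then ((i.1 \ j.1).card : ℚ)⁻¹ else 0) with hf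
  have hsymm : ∀ l' ∉ j.1, f l' = f l := by
    intro l' hl'
    let s : Equiv.Perm (Fin m) := Equiv.swap l l'
    have hsj : j.1.map s.toEmbedding = j.1 := by
      apply Finset.eq_of_subset_of_card_le
      · intro x hx
        obtain ⟨y, hy, rfl⟩ := Finset.mem_map.1 hx
        have h1 : y ≠ l := fun h => hl (h ▸ hy)
        have h2 : y ≠ l' := fun h => hl' (h ▸ hy)
        simpa [s, Equiv.swap_apply_of_ne_of_ne h1 h2] using hy
      · simp
    refine Fintype.sum_bijective
      (fun i : {B : Finset (Fin m) // B.card = a} =>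
        (⟨i.1.map s.toEmbedding, by rw [Finset.card_map]; exact i.2⟩ :
          {B : Finset (Fin m) // B.card = a})) ?_ _ _ ?_
    · refine Finite.injective_iff_bijective.1 fun x y hxy => Subtype.ext ?_
      exact Finset.map_injective _ (Subtype.ext_iff.1 hxy)
    · intro i
      have h1 : i.1.map s.toEmbedding \ j.1 = (i.1 \ j.1).map s.toEmbedding := by
        conv_lhs => rw [← hsj]
        simp [Finset.map_eq_image, Finset.image_sdiff _ _ s.injective]
      have h2 : l ∈ i.1.map s.toEmbedding ↔ l' ∈ i.1 := by
        simp [Finset.mem_map_equiv, s]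
      simp only [h1, h2, Finset.card_map]
  have htot : ∑ l' ∈ j.1ᶜ, f l' = (Fintype.card {B : Finset (Fin m) // B.card = a} : ℚ) - 1 := by
    rw [hf, Finset.sum_comm]
    rw [Finset.sum_congr rfl fun i _ => row_sum i j]
    simp
  rw [← htot, Finset.sum_congr rfl fun l' hl' => hsymm l' (Finset.mem_compl.1 hl'),
    Finset.sum_const, Finset.card_compl, Fintype.card_fin, j.2, nsmul_eq_mul]

/-- Here `a = m - t`, `n = N - 1`, and `(i, s)` is the `s`-th equation sent by user `i`.
The equations received by user `j` can be matched with its unknowns so that every equation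
involves its unknown. -/
lemma exists_matching {m a n : ℕ}
    (hn : Fintype.card {B : Finset (Fin m) // B.card = a} = n + 1) (hn0 : 1 ≤ n)
    (j : {B : Finset (Fin m) // B.card = a}) :
    ∃ e : {r : {B : Finset (Fin m) // B.card = a} × Fin (m - a) // r.1 ≠ j} ≃
        {c : Fin m × Fin n // c.1 ∉ j.1}, ∀ r, (e r).1.1 ∈ r.1.1.1 := by
  classical
  have hcol : ∀ l ∉ j.1, ((m - a : ℕ) : ℚ) * ∑ i : {B : Finset (Fin m) // B.card = a},
      (if l ∈ i.1 then ((i.1 \ j.1).card : ℚ)⁻¹ else 0) = n := by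
    intro l hl
    rw [column_sum j l hl, hn]; simp
  have hnq : (n : ℚ) ≠ 0 := by exact_mod_cast (by omega : n ≠ 0)
  let W : {r : {B : Finset (Fin m) // B.card = a} × Fin (m - a) // r.1 ≠ j} → {c : Fin m × Fin n // c.1 ∉ j.1} → ℚ :=
    fun r c => (if c.1.1 ∈ r.1.1.1 then ((r.1.1.1 \ j.1).card : ℚ)⁻¹ else 0) * (n : ℚ)⁻¹
  have hrows : ∀ r, r ∈ (Finset.univ.erase j) ×ˢ (Finset.univ : Finset (Fin (m - a))) ↔
      r.1 ≠ j := by simp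
  have hcols : ∀ c, c ∈ j.1ᶜ ×ˢ (Finset.univ : Finset (Fin n)) ↔ c.1 ∉ j.1 := by simp
  have hW0 : ∀ r c, 0 ≤ W r c := by
    intro r c
    simp only [W]
    split_ifs <;> positivity
  have hWr : ∀ r, ∑ c, W r c = 1 := by
    intro r
    simp only [W]
    rw [← Finset.sum_subtype _ hcols fun c : Fin m × Fin n =>
      (if c.1 ∈ r.1.1.1 then ((r.1.1.1 \ j.1).card : ℚ)⁻¹ else 0) * (n : ℚ)⁻¹]
    rw [← Finset.sum_mul, Finset.sum_product_right]
    simp only [row_sum, if_neg r.2]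
    simp [hnq]
  have hWc : ∀ c, ∑ r, W r c ≤ 1 := by
    intro c
    simp only [W]
    rw [← Finset.sum_subtype _ hrows
      fun r : {B : Finset (Fin m) // B.card = a} × Fin (m - a) =>
        (if c.1.1 ∈ r.1.1 then ((r.1.1 \ j.1).card : ℚ)⁻¹ else 0) * (n : ℚ)⁻¹]
    rw [← Finset.sum_mul, Finset.sum_product_right]
    simp only [Finset.sum_const, Finset.card_univ, Fintype.card_fin, nsmul_eq_mul]
    have hj : (if c.1.1 ∈ j.1 then ((j.1 \ j.1).card : ℚ)⁻¹ else 0) = 0 := if_neg c.2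
    rw [Finset.sum_erase (a := j) _ hj, hcol _ c.2, mul_inv_cancel₀ hnq]
  obtain ⟨f, hf, hW⟩ := exists_injective_of_weight W hW0 hWr hWc
  have hcard : Fintype.card {r : {B : Finset (Fin m) // B.card = a} × Fin (m - a) // r.1 ≠ j}
      = Fintype.card {c : Fin m × Fin n // c.1 ∉ j.1} := by
    rw [Fintype.card_of_subtype _ hrows, Fintype.card_of_subtype _ hcols, Finset.card_product,
      Finset.card_product, Finset.card_erase_of_mem (Finset.mem_univ j), Finset.card_univ, hn,
      Finset.card_compl, j.2]
    simp [mul_comm]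
  refine ⟨Equiv.ofBijective f ((Fintype.bijective_iff_injective_and_card f).2 ⟨hf, hcard⟩), ?_⟩
  intro r
  by_contra h
  refine hW r ?_
  have h' : (f r).1.1 ∉ r.1.1.1 := h
  simp only [W]
  rw [if_neg h', zero_mul]

/-! ### Achievability -/

/-- A generic matrix with prescribed zeros, specialized to a finite field so that all the square
submatrices admitting a matching (via `e j`) are invertible at once. -/
lemma exists_coeffs {ι R C : Type*} [Fintype ι] [Finite R] [Finite C] (E : R → C → Prop)
    (P : ι → R → Prop) (Q : ι → C → Prop) [∀ j, Fintype {r // P j r}]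
    [∀ j, DecidableEq {r // P j r}]
    (e : ∀ j, {r // P j r} ≃ {c // Q j c}) (he : ∀ j r, E r.1 (e j r).1) :
    ∃ k : ℕ, 1 ≤ k ∧ ∃ M : R → C → GaloisField 2 k, (∀ r c, ¬ E r c → M r c = 0) ∧
      ∀ j, (Matrix.of fun r r' : {r // P j r} => M r.1 (e j r').1).det ≠ 0 := by
  classical
  let G : R → C → MvPolynomial (R × C) (ZMod 2) :=
    fun r c => if E r c then MvPolynomial.X (r, c) else 0
  let D : ι → MvPolynomial (R × C) (ZMod 2) := fun j =>
    (Matrix.of fun r r' : {r // P j r} => G r.1 (e j r').1).det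
  -- Evaluating at the indicator of the matching gives the identity matrix.
  have hD : ∀ j, D j ≠ 0 := by
    intro j h0
    let x : R × C → ZMod 2 := fun p => if ∃ r, p = (r.1, (e j r).1) then 1 else 0
    have h1 := congrArg (MvPolynomial.eval x) h0
    simp only [D, RingHom.map_det, map_zero] at h1
    have h2 : (MvPolynomial.eval x).mapMatrix
        (Matrix.of fun r r' : {r // P j r} => G r.1 (e j r').1) = 1 := by
      ext r r'
      by_cases hrr : r = r'
      · subst hrr
        have : ∃ r', (r.1, (e j r).1) = (r'.1, (e j r').1) := ⟨r, rfl⟩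
        simp only [RingHom.mapMatrix_apply, Matrix.map_apply, Matrix.of_apply, G, if_pos (he j r),
          MvPolynomial.eval_X, x, if_pos this, Matrix.one_apply_eq]
      · have : ¬ ∃ r'', ((r.1, (e j r').1) : R × C) = (r''.1, (e j r'').1) := by
          rintro ⟨r'', h⟩
          rw [Prod.mk.injEq] at h
          have h1 := Subtype.ext h.1
          have h2 := (e j).injective (Subtype.ext h.2)
          exact hrr (h1.trans h2.symm)
        rw [Matrix.one_apply_ne hrr]
        simp only [RingHom.mapMatrix_apply, Matrix.map_apply, Matrix.of_apply, G]
        split_ifs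
        · simp only [MvPolynomial.eval_X, x, if_neg this]
        · simp
    rw [h2, Matrix.det_one] at h1
    exact one_ne_zero h1
  let F : MvPolynomial (R × C) (ZMod 2) := ∏ j, D j
  have hF : F ≠ 0 := Finset.prod_ne_zero_iff.2 fun j _ => hD j
  let k := F.totalDegree + 1
  let φ : ZMod 2 →+* GaloisField 2 k := algebraMap _ _
  have hF' : MvPolynomial.map φ F ≠ 0 := by
    rw [Ne, map_eq_zero_iff _ (MvPolynomial.map_injective _ φ.injective)]
    exact hF
  have : Fintype (GaloisField 2 k) := Fintype.ofFinite _
  obtain ⟨x, hx⟩ : ∃ x : R × C → GaloisField 2 k, MvPolynomial.eval x (MvPolynomial.map φ F) ≠ 0 := by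
    by_contra! hcon
    refine hF' (MvPolynomial.eq_zero_of_eval_zero_at_prod_finset _ (fun _ => Finset.univ) ?_
      fun x _ => hcon x)
    intro p
    have hcard : Fintype.card (GaloisField 2 k) = 2 ^ k := by
      rw [← Nat.card_eq_fintype_card]; exact GaloisField.card 2 k (by omega)
    rw [Finset.card_univ, hcard]
    calc (MvPolynomial.map φ F).degreeOf p ≤ (MvPolynomial.map φ F).totalDegree :=
          MvPolynomial.degreeOf_le_totalDegree _ _
      _ ≤ F.totalDegree := Finset.sup_mono (MvPolynomial.support_map_subset φ F)
      _ < k := Nat.lt_succ_self _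
      _ < 2 ^ k := Nat.lt_two_pow_self
  refine ⟨k, by omega, fun r c => if E r c then x (r, c) else 0, fun r c h => if_neg h, ?_⟩
  intro j hj
  apply hx
  rw [MvPolynomial.eval_map, ← MvPolynomial.coe_eval₂Hom, map_prod]
  refine Finset.prod_eq_zero (Finset.mem_univ j) ?_
  rw [RingHom.map_det, ← hj]
  congr 1
  ext r r'
  simp only [RingHom.mapMatrix_apply, Matrix.map_apply, Matrix.of_apply, G]
  split_ifs <;> simp

/-- Injectivity of the transcript on messages agreeing on `A j` suffices for decodability. -/
lemma valid_of_injective {m κ t : ℕ} {ι : Type*} {A : ι → Finset (Fin m)}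
    (htm : t ≤ m) (hA : ∀ j, (A j).card = m - t) (code : DecCode m κ A)
    (h : ∀ j w w', (∀ i ∈ A j, w i = w' i) → code.X w = code.X w' → w = w') : code.Valid t := by
  classical
  intro j
  refine ⟨(A j)ᶜ, disjoint_compl_left, ?_, ?_⟩
  · rw [Finset.card_compl, hA, Fintype.card_fin]; omega
  · refine ⟨fun x s i _ => if hw : ∃ w, code.X w = x ∧ ∀ i (hi : i ∈ A j), w i = s i hi then
      hw.choose i else fun _ => false, ?_⟩
    intro w i hi
    have hw : ∃ w', code.X w' = code.X w ∧ ∀ i (_ : i ∈ A j), w' i = w i := ⟨w, rfl, fun _ _ => rfl⟩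
    beta_reduce
    rw [dif_pos hw]
    exact congrFun (h j _ _ hw.choose_spec.2 hw.choose_spec.1) i

/-- The one-shot linear code in which every user sends `t` symbols. -/
lemma achievability {m t n : ℕ} {ι : Type*} [Fintype ι] {A : ι → Finset (Fin m)}
    (htm : t ≤ m) (hA : ∀ j, (A j).card = m - t) (hN : Fintype.card ι = n + 1) (hn : 1 ≤ n)
    (e : ∀ j, {r : ι × Fin t // r.1 ≠ j} ≃ {c : Fin m × Fin n // c.1 ∉ A j})
    (he : ∀ j r, (e j r).1.1 ∈ A r.1.1) :
    ∃ κ : ℕ, 1 ≤ κ ∧ ∃ code : DecCode m κ A, code.Valid t ∧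
      (t : ℝ) * Fintype.card ι / ((Fintype.card ι : ℝ) - 1) = code.normLen := by
  classical
  obtain ⟨k, hk, M, hM0, hM⟩ := exists_coeffs (fun (r : ι × Fin t) (c : Fin m × Fin n) => c.1 ∈ A r.1)
    (fun j r => r.1 ≠ j) (fun j c => c.1 ∉ A j) e he
  have : Fintype (GaloisField 2 k) := Fintype.ofFinite _
  have hcard : Fintype.card (GaloisField 2 k) = 2 ^ k := by
    rw [← Nat.card_eq_fintype_card]; exact GaloisField.card 2 k (by omega)
  let split : (Fin (k * n) → Bool) ≃ (Fin n → GaloisField 2 k) :=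
    Fintype.equivOfCardEq (by simp [hcard, pow_mul])
  let pack : (Fin t → GaloisField 2 k) ≃ (Fin (k * t) → Bool) :=
    Fintype.equivOfCardEq (by simp [hcard, pow_mul])
  let user : Fin (n + 1) ≃ ι := (Fintype.equivFinOfCardEq hN).symm
  let code : DecCode m (k * n) A :=
    { T := n + 1
      sender := user
      c := fun _ => k * t
      X := fun w τ => pack fun s => ∑ c : Fin m × Fin n, M (user τ, s) c * split (w c.1) c.2
      causal := by
        intro w w' τ hw _
        congr 1
        funext s
        refine Finset.sum_congr rfl fun c _ => ?_
        by_cases hc : c.1 ∈ A (user τ)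
        · rw [hw c.1 hc]
        · rw [hM0 (user τ, s) c hc, zero_mul, zero_mul] }
  refine ⟨k * n, Nat.mul_pos hk hn, code, valid_of_injective htm hA code ?_, ?_⟩
  · intro j w w' hw hX
    let v : Fin m × Fin n → GaloisField 2 k := fun c => split (w c.1) c.2 - split (w' c.1) c.2
    have hv0 : ∀ c, c.1 ∈ A j → v c = 0 := fun c hc => by simp only [v, hw c.1 hc, sub_self]
    have heq : ∀ r : ι × Fin t, ∑ c, M r c * v c = 0 := by
      rintro ⟨i, s⟩
      have h1 := congrFun (pack.injective (congrFun hX (user.symm i))) s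
      simp only [Equiv.apply_symm_apply] at h1
      simp only [v, mul_sub, Finset.sum_sub_distrib, h1, sub_self]
    have hker : (Matrix.of fun r r' : {r : ι × Fin t // r.1 ≠ j} => M r.1 (e j r').1).mulVec
        (fun r' => v (e j r').1) = 0 := by
      funext r
      have h2 : ∑ c : {c : Fin m × Fin n // c.1 ∉ A j}, M r.1 c.1 * v c.1 = 0 := by
        rw [← heq r.1, ← Finset.sum_subtype (Finset.univ.filter fun c : Fin m × Fin n => c.1 ∉ A j)
          (by simp) fun c => M r.1 c * v c]
        refine Finset.sum_subset (Finset.subset_univ _) fun c _ hc => ?_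
        rw [hv0 c (by simpa using hc), mul_zero]
      rw [← (e j).sum_comp] at h2
      exact h2
    have hvz := Matrix.eq_zero_of_mulVec_eq_zero (hM j) hker
    have hv : ∀ c, v c = 0 := by
      intro c
      by_cases hc : c.1 ∈ A j
      · exact hv0 c hc
      · have := congrFun hvz ((e j).symm ⟨c, hc⟩)
        simpa using this
    funext i
    refine split.injective (funext fun s => sub_eq_zero.1 (hv (i, s)))
  · have hk' : (k : ℝ) ≠ 0 := by exact_mod_cast (by omega : k ≠ 0)
    have hn' : (n : ℝ) ≠ 0 := by exact_mod_cast (by omega : n ≠ 0)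
    simp only [DecCode.normLen, code, hN, Finset.sum_const, Finset.card_univ, Fintype.card_fin]
    push_cast
    rw [nsmul_eq_mul]
    push_cast
    rw [add_sub_cancel_right]
    field_simp

/-- Theorem 1, case `smin = smax = m - t`: for the decentralized complete–`S`
PICOD(`t`) problem with `m` messages and `S = {m - t}`, `1 ≤ t ≤ m - 1`, the optimal
normalized code-length is `t * C(m, m-t) / (C(m, m-t) - 1)`. -/
theorem decentralized_picod_multicast (m t : ℕ) (ht : 1 ≤ t) (ht' : t ≤ m - 1) :
    optLen m t {m - t} =
      (t : ℝ) * (Nat.choose m (m - t) : ℝ) / ((Nat.choose m (m - t) : ℝ) - 1) := by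
  classical
  have htm : t ≤ m := by omega
  let g : CompleteS m {m - t} ≃ {B : Finset (Fin m) // B.card = m - t} :=
    Equiv.subtypeEquivRight fun B => by simp
  have : Fintype (CompleteS m {m - t}) := Fintype.ofEquiv _ g.symm
  have hcardU : Fintype.card {B : Finset (Fin m) // B.card = m - t} = m.choose (m - t) := by
    simp
  have hcard : Fintype.card (CompleteS m {m - t}) = m.choose (m - t) := by
    rw [Fintype.card_congr g, hcardU]
  have hA : ∀ B : CompleteS m {m - t}, B.val.card = m - t := fun B => (g B).2
  have hN : 2 ≤ m.choose (m - t) := by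
    rw [Nat.choose_symm htm]
    have h1 := Nat.choose_le_choose t (show t + 1 ≤ m by omega)
    rw [Nat.choose_succ_self_right] at h1
    omega
  obtain ⟨n, hn⟩ : ∃ n, m.choose (m - t) = n + 1 := ⟨m.choose (m - t) - 1, by omega⟩
  have hmt : m - (m - t) = t := by omega
  have hmatch : ∀ j : CompleteS m {m - t},
      ∃ e : {r : CompleteS m {m - t} × Fin t // r.1 ≠ j} ≃ {c : Fin m × Fin n // c.1 ∉ j.val},
        ∀ r, (e r).1.1 ∈ r.1.1.val := by
    intro j
    obtain ⟨e, he⟩ := exists_matching (hcardU.trans hn) (by omega) (g j)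
    let p : {r : CompleteS m {m - t} × Fin t // r.1 ≠ j} ≃
        {r : {B : Finset (Fin m) // B.card = m - t} × Fin (m - (m - t)) // r.1 ≠ g j} :=
      (g.prodCongr (finCongr hmt.symm)).subtypeEquiv fun r => by simp
    exact ⟨p.trans e, fun r => he (p r)⟩
  choose e he using hmatch
  rw [← hcard]
  refine IsLeast.csInf_eq ⟨?_, ?_⟩
  · exact achievability htm hA (hcard.trans hn) (by omega) e he
  · rintro r ⟨κ, hκ, code, hv, rfl⟩
    exact converse htm hA (by omega) hκ code hv
end

section
/- For the decentralized complete–S PICOD(t) problem with m messages and complement-consecutive S = {0,…,s_min−1} ∪ {s_max+1,…,m−t}, where 0 < s_min ≤ s_max < m−t, the optimal normalized code-length is ℓ* = min{ m , |S| + 2t − 2 }, where |S| = s_min + (m − t − s_max). -/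
/-!
Only the final transcript matters for the lower bound, so causality plays no role there. Call `i`
determined by `A` when the transcript and the messages in `A` determine message `i`; this is a
closure operator (`DecCode.cl`), and validity says that every user `A` has at least `t` elements
of `cl A` outside `A`. Hence no closed set has a cardinality in `S`. So `cl ∅` has at least `smin`
elements; it then contains a user of size `smin - 1` together with everything this user decodes,
so it has at least `smin - 1 + t` elements. Adding `smax + 1 - |cl ∅|` further elements `E` gives a
closure with at least `smax + 1` elements, thus more than `m - t`; it contains a user of size
`m - t` and what this user decodes, so it is everything. Then `w ↦ (transcript, w restricted to E)`
is injective (`exists_small_generator`, `card_le_of_cl_univ`), and counting gives the bound.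

For the upper bound there are two codes. Sending every message uncoded costs `m`. Alternatively,
send the first `smin - 1 + t` messages uncoded, which serves all users of size less than `smin`.
After this the user `{t, …, m - 1}` knows all messages and sends `m - smax - 1` Vandermonde
combinations over `GF(2^κ)` of all `m` messages; a user of size at least `smax + 1` can then solve
for all its missing messages (`exists_mds`).
-/

open scoped BigOperators

/-! ### Lower bound -/

namespace DecCode

variable {m κ : ℕ} {ι : Type*} {A : ι → Finset (Fin m)}

open Classical in
/-- The messages determined by the transcript together with the messages in `B`. -/
noncomputable def cl (code : DecCode m κ A) (B : Finset (Fin m)) : Finset (Fin m) :=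
  Finset.univ.filter fun i =>
    ∀ w w' : Fin m → Fin κ → Bool, code.X w = code.X w' → (∀ a ∈ B, w a = w' a) → w i = w' i

lemma mem_cl {code : DecCode m κ A} {B : Finset (Fin m)} {i : Fin m} :
    i ∈ code.cl B ↔ ∀ w w' : Fin m → Fin κ → Bool,
      code.X w = code.X w' → (∀ a ∈ B, w a = w' a) → w i = w' i := by
  simp [cl]

lemma subset_cl (code : DecCode m κ A) (B : Finset (Fin m)) : B ⊆ code.cl B :=
  fun i hi => mem_cl.2 fun _ _ _ h => h i hi

lemma cl_subset_of_subset (code : DecCode m κ A) {B C : Finset (Fin m)} (h : B ⊆ code.cl C) :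
    code.cl B ⊆ code.cl C := fun _ hi => mem_cl.2 fun w w' hX hC =>
  mem_cl.1 hi w w' hX fun a ha => mem_cl.1 (h ha) w w' hX hC

/-- A valid code lets every user determine `t` messages outside its side information, so a closed
set containing a user's side information has at least `t` more elements. -/
lemma Valid.card_add_le {t : ℕ} {code : DecCode m κ A} (hv : code.Valid t) (j : ι)
    {C : Finset (Fin m)} (h : A j ⊆ code.cl C) : (A j).card + t ≤ (code.cl C).card := by
  obtain ⟨D, hD, hc, dec, hdec⟩ := hv j
  rw [← hc, ← Finset.card_union_of_disjoint hD.symm]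
  refine Finset.card_le_card (Finset.union_subset h fun i hi => ?_)
  refine code.cl_subset_of_subset h (mem_cl.2 fun w w' hX hA => ?_)
  have hside : (fun (i : Fin m) (_ : i ∈ A j) => w i) = fun i _ => w' i := by
    funext i hi
    exact hA i hi
  rw [← hdec w i hi, ← hdec w' i hi, hX, hside]

/-- Conversely, a code is valid if every user determines at least `t` messages outside its side
information. -/
lemma valid_of_cl {t : ℕ} {code : DecCode m κ A}
    (h : ∀ j, ∃ D : Finset (Fin m), Disjoint D (A j) ∧ D.card = t ∧ D ⊆ code.cl (A j)) :
    code.Valid t := by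
  classical
  intro j
  obtain ⟨D, hD, hc, hsub⟩ := h j
  -- The decoder outputs any message tuple consistent with what the user has observed.
  refine ⟨D, hD, hc, fun x s i _ =>
    if hw : ∃ w : Fin m → Fin κ → Bool, code.X w = x ∧ ∀ a, ∀ ha : a ∈ A j, w a = s a ha
      then hw.choose i else fun _ => false, fun w i hi => ?_⟩
  have hw : ∃ w' : Fin m → Fin κ → Bool, code.X w' = code.X w ∧ ∀ a ∈ A j, w' a = w a :=
    ⟨w, rfl, fun _ _ => rfl⟩
  simp only
  rw [dif_pos hw]
  exact mem_cl.1 (hsub hi) _ _ hw.choose_spec.1 hw.choose_spec.2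

lemma card_le_of_cl_univ (code : DecCode m κ A) {E : Finset (Fin m)}
    (hE : code.cl E = Finset.univ) : κ * m ≤ (∑ τ, code.c τ) + κ * E.card := by
  have hinj : Function.Injective fun w : Fin m → Fin κ → Bool =>
      (code.X w, fun e : E => w e) := by
    intro w w' h
    rw [Prod.mk.injEq] at h
    funext i
    have hi : i ∈ code.cl E := by simp [hE]
    exact mem_cl.1 hi w w' h.1 fun a ha => congrFun h.2 ⟨a, ha⟩
  have h := Fintype.card_le_of_injective _ hinj
  simp only [Fintype.card_prod, Fintype.card_pi, Fintype.card_bool, Finset.prod_const,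
    Finset.card_univ, Fintype.card_fin, Finset.prod_pow_eq_pow_sum, Fintype.card_coe,
    ← pow_mul, ← pow_add] at h
  exact (Nat.pow_le_pow_iff_right (by norm_num)).1 h

end DecCode

lemma exists_small_generator {m t smin smax κ : ℕ} (ht : 1 ≤ t)
    (h1 : 0 < smin) (h2 : smin ≤ smax) (h3 : smax < m - t)
    (code : DecCode m κ (fun B : CompleteS m
      (Finset.range smin ∪ Finset.Icc (smax + 1) (m - t)) => B.val)) (hv : code.Valid t) :
    ∃ E : Finset (Fin m), E.card ≤ smax + 2 - (smin + t) ∧ code.cl E = Finset.univ := by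
  have key : ∀ B C : Finset (Fin m), (B.card < smin ∨ smax + 1 ≤ B.card ∧ B.card ≤ m - t) →
      B ⊆ code.cl C → B.card + t ≤ (code.cl C).card := by
    intro B C hB hBC
    exact hv.card_add_le ⟨B, by simpa using hB⟩ hBC
  have hF : smin - 1 + t ≤ (code.cl ∅).card := by
    have h : smin ≤ (code.cl ∅).card := by
      by_contra hlt
      have := key (code.cl ∅) ∅ (by omega) subset_rfl
      omega
    obtain ⟨B, hB, hc⟩ := Finset.exists_subset_card_eq (show smin - 1 ≤ (code.cl ∅).card by omega)
    have := key B ∅ (by omega) hB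
    omega
  obtain ⟨E, hE, hEc⟩ := Finset.exists_subset_card_eq
    (show smax + 1 - (code.cl ∅).card ≤ ((code.cl ∅)ᶜ).card by
      rw [Finset.card_compl, Fintype.card_fin]; omega)
  refine ⟨E, by omega, ?_⟩
  have hG : smax + 1 ≤ (code.cl E).card := by
    have hsub : code.cl ∅ ∪ E ⊆ code.cl E :=
      Finset.union_subset (code.cl_subset_of_subset (Finset.empty_subset _)) (code.subset_cl E)
    have hdisj : Disjoint (code.cl ∅) E :=
      (Finset.subset_compl_iff_disjoint_left).1 hE
    have := Finset.card_le_card hsub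
    rw [Finset.card_union_of_disjoint hdisj] at this
    omega
  have hG' : m - t < (code.cl E).card := by
    by_contra hlt
    have := key (code.cl E) E (by omega) subset_rfl
    omega
  obtain ⟨B, hB, hc⟩ := Finset.exists_subset_card_eq hG'.le
  have := key B E (by omega) hB
  rw [← Finset.card_eq_iff_eq_univ, Fintype.card_fin]
  have := Finset.card_le_univ (code.cl E)
  rw [Fintype.card_fin] at this
  omega

/-! ### Upper bound -/

/-- Reed–Solomon parity checks: any `n` of the messages are determined by the remaining ones and
the first `n` checks. -/
lemma exists_mds_s2 (m : ℕ) : ∃ κ : ℕ, 1 ≤ κ ∧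
    ∃ enc : (Fin m → Fin κ → Bool) → ℕ → Fin κ → Bool,
      ∀ (n : ℕ) (B : Finset (Fin m)), m ≤ B.card + n → ∀ w w' : Fin m → Fin κ → Bool,
        (∀ k < n, enc w k = enc w' k) → (∀ i ∈ B, w i = w' i) → w = w' := by
  classical
  have : Fact (Nat.Prime 2) := ⟨Nat.prime_two⟩
  have hcard : Nat.card (GaloisField 2 (m + 1)) = 2 ^ (m + 1) :=
    GaloisField.card 2 (m + 1) (by omega)
  have : Finite (GaloisField 2 (m + 1)) :=
    Nat.finite_of_card_ne_zero (by rw [hcard]; positivity)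
  have : Fintype (GaloisField 2 (m + 1)) := Fintype.ofFinite _
  rw [Nat.card_eq_fintype_card] at hcard
  obtain ⟨e⟩ : Nonempty ((Fin (m + 1) → Bool) ≃ GaloisField 2 (m + 1)) := by
    refine Fintype.card_eq.1 ?_
    simp [hcard]
  obtain ⟨α⟩ : Nonempty (Fin m ↪ GaloisField 2 (m + 1)) := by
    refine Function.Embedding.nonempty_of_card_le ?_
    rw [hcard, Fintype.card_fin]
    exact (Nat.lt_succ_self m).le.trans (Nat.lt_two_pow_self).le
  refine ⟨m + 1, by omega, fun w k => e.symm (∑ i, α i ^ k * e (w i)), ?_⟩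
  intro n B hB w w' henc hside
  have hd : ∀ P : Polynomial (GaloisField 2 (m + 1)), P.natDegree < n →
      ∑ i, P.eval (α i) * (e (w i) - e (w' i)) = 0 := by
    intro P hP
    simp only [Polynomial.eval_eq_sum_range, Finset.sum_mul]
    rw [Finset.sum_comm]
    refine Finset.sum_eq_zero fun k hk => ?_
    have h := e.symm.injective (henc k (by simp at hk; omega))
    simp only [mul_assoc, ← Finset.mul_sum, mul_sub, Finset.sum_sub_distrib]
    rw [h]
    ring
  funext j
  by_cases hj : j ∈ B
  · exact hside j hj
  -- Test against the polynomial vanishing at every unknown position except `j`.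
  have hjc : j ∈ Bᶜ := by simpa using hj
  have hpos : 0 < (Bᶜ).card := Finset.card_pos.2 ⟨j, hjc⟩
  have h := hd (∏ i ∈ Bᶜ.erase j, (Polynomial.X - Polynomial.C (α i))) (by
    rw [Polynomial.natDegree_finsetProd_X_sub_C_eq_card, Finset.card_erase_of_mem hjc]
    rw [Finset.card_compl, Fintype.card_fin] at *
    omega)
  rw [Finset.sum_eq_single j] at h
  · rcases mul_eq_zero.1 h with h | h
    · rw [Polynomial.eval_prod, Finset.prod_eq_zero_iff] at h
      obtain ⟨i, hi, h⟩ := h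
      simp only [Polynomial.eval_sub, Polynomial.eval_X, Polynomial.eval_C] at h
      exact absurd (α.injective (sub_eq_zero.1 h)).symm (Finset.ne_of_mem_erase hi)
    · exact e.injective (sub_eq_zero.1 h)
  · intro i _ hij
    by_cases hi : i ∈ B
    · rw [hside i hi, sub_self, mul_zero]
    · rw [Polynomial.eval_prod, Finset.prod_eq_zero (i := i), zero_mul]
      · simp [hij, hi]
      · simp
  · simp

lemma exists_user_s2 {m : ℕ} {S : Finset ℕ} {s : ℕ} (hs : s ∈ S) (h1 : 1 ≤ s) (hm : s ≤ m)
    (i : Fin m) : ∃ B : CompleteS m S, i ∈ B.val := by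
  obtain ⟨B, hB, -, hc⟩ := Finset.exists_subsuperset_card_eq (s := {i}) (t := Finset.univ) (n := s)
    (Finset.subset_univ _) (by simpa using h1) (by simpa using hm)
  exact ⟨⟨B, hc ▸ hs⟩, hB (by simp)⟩

lemma exists_uncoded_s2 {m t : ℕ} {S : Finset ℕ} (hS : ∀ s ∈ S, s + t ≤ m)
    (hu : ∀ i : Fin m, ∃ B : CompleteS m S, i ∈ B.val) :
    ∃ code : DecCode m 1 (fun B : CompleteS m S => B.val),
      code.Valid t ∧ (m : ℝ) = code.normLen := by
  choose u hu using hu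
  let code : DecCode m 1 (fun B : CompleteS m S => B.val) :=
    { T := m
      sender := u
      c := fun _ => 1
      X := fun w => w
      causal := fun _ _ τ h _ => h τ (hu τ) }
  refine ⟨code, DecCode.valid_of_cl fun j => ?_, by simp [DecCode.normLen, code]⟩
  have hj := hS _ j.2
  obtain ⟨D, hD, hc⟩ := Finset.exists_subset_card_eq (show t ≤ (j.valᶜ).card by
    rw [Finset.card_compl, Fintype.card_fin]; omega)
  exact ⟨D, (Finset.subset_compl_iff_disjoint_right).1 hD, hc,
    fun i _ => DecCode.mem_cl.2 fun w w' hX _ => congrFun hX i⟩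

/-- The two-phase code: `k` uncoded messages, then `r` Reed–Solomon checks sent by the user
`{t, …, m - 1}`. -/
lemma exists_coded {m t k r : ℕ} {S : Finset ℕ} (htk : t ≤ k) (hkm : k ≤ m)
    (htS : m - t ∈ S) (hS : ∀ s ∈ S, s + t ≤ m ∧ (s + t ≤ k ∨ m ≤ s + r))
    (hu : ∀ i : Fin m, ∃ B : CompleteS m S, i ∈ B.val) :
    ∃ κ : ℕ, 1 ≤ κ ∧ ∃ code : DecCode m κ (fun B : CompleteS m S => B.val),
      code.Valid t ∧ ((k + r : ℕ) : ℝ) = code.normLen := by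
  classical
  choose u hu using hu
  obtain ⟨κ, hκ, enc, henc⟩ := exists_mds_s2 m
  have hlow : (Finset.univ.filter fun i : Fin m => t ≤ (i : ℕ)).card = m - t := by
    have h := Finset.card_filter_add_card_filter_not (s := (Finset.univ : Finset (Fin m)))
      (fun i => (i : ℕ) < t)
    rw [Fin.card_filter_val_lt, Finset.card_univ, Fintype.card_fin] at h
    simp only [not_lt] at h
    omega
  let v : CompleteS m S := ⟨Finset.univ.filter fun i : Fin m => t ≤ (i : ℕ), hlow ▸ htS⟩
  let code : DecCode m κ (fun B : CompleteS m S => B.val) :=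
    { T := k + r
      sender := fun τ => if h : (τ : ℕ) < k then u ⟨τ, by omega⟩ else v
      c := fun _ => κ
      X := fun w τ => if h : (τ : ℕ) < k then w ⟨τ, by omega⟩ else enc w (τ - k)
      causal := by
        intro w w' τ hs hp
        by_cases h : (τ : ℕ) < k
        · simp only [h, dite_true] at hs ⊢
          exact hs _ (hu _)
        · simp only [h, dite_false] at hs ⊢
          -- The sender holds the messages from `t` on, and the earlier ones were sent uncoded.
          have hw : w = w' := by
            funext i
            by_cases hi : t ≤ (i : ℕ)
            · exact hs i (by simp [v, hi])
            · have hik : (i : ℕ) < k := by omega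
              have := hp ⟨i, by omega⟩ (by rw [Fin.lt_def]; simp only; omega)
              simpa [hik] using this
          rw [hw] }
  have hlen : ((k + r : ℕ) : ℝ) = code.normLen := by
    have : (κ : ℝ) ≠ 0 := by positivity
    simp only [DecCode.normLen, code, Finset.sum_const, Finset.card_univ, Fintype.card_fin,
      nsmul_eq_mul]
    field_simp
  refine ⟨κ, hκ, code, DecCode.valid_of_cl fun j => ?_, hlen⟩
  obtain ⟨hj, hj' | hj'⟩ := hS _ j.2
  · have hk : (Finset.univ.filter fun i : Fin m => (i : ℕ) < k).card = k := by
      rw [Fin.card_filter_val_lt]; omega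
    obtain ⟨D, hD, hc⟩ := Finset.exists_subset_card_eq
      (show t ≤ ((Finset.univ.filter fun i : Fin m => (i : ℕ) < k) \ j.val).card by
        have := Finset.le_card_sdiff j.val (Finset.univ.filter fun i : Fin m => (i : ℕ) < k)
        omega)
    refine ⟨D, Finset.disjoint_of_subset_left hD Finset.sdiff_disjoint, hc, fun i hi => ?_⟩
    have hik : (i : ℕ) < k := by
      have := hD hi
      simp at this
      exact this.1
    refine DecCode.mem_cl.2 fun w w' hX _ => ?_
    have := congrFun hX (⟨i, by omega⟩ : Fin (k + r))
    simpa [code, hik] using this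
  · obtain ⟨D, hD, hc⟩ := Finset.exists_subset_card_eq (show t ≤ (j.valᶜ).card by
      rw [Finset.card_compl, Fintype.card_fin]; omega)
    refine ⟨D, (Finset.subset_compl_iff_disjoint_right).1 hD, hc, fun i _ => ?_⟩
    refine DecCode.mem_cl.2 fun w w' hX hA => congrFun (henc r j.val hj' w w' (fun n hn => ?_) hA) i
    have := congrFun hX (⟨k + n, by omega⟩ : Fin (k + r))
    simpa [code] using this

/-- Theorem 2: for the decentralized complete–`S` PICOD(`t`) problem with
`m` messages and complement-consecutive `S = [0 : smin - 1] ∪ [smax + 1 : m - t]`, with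
`0 < smin ≤ smax < m - t`, the optimal normalized code-length is `min m (|S| + 2t - 2)`,
where `|S| = smin + (m - t - smax)`. -/
theorem decentralized_picod_complement_consecutive (m t smin smax : ℕ) (ht : 1 ≤ t)
    (h1 : 0 < smin) (h2 : smin ≤ smax) (h3 : smax < m - t) :
    optLen m t (Finset.range smin ∪ Finset.Icc (smax + 1) (m - t)) =
      ((min m (smin + (m - t - smax) + 2 * t - 2) : ℕ) : ℝ) := by
  refine IsLeast.csInf_eq ⟨?_, ?_⟩
  · have hmem : m - t ∈ Finset.range smin ∪ Finset.Icc (smax + 1) (m - t) := by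
      simp only [Finset.mem_union, Finset.mem_range, Finset.mem_Icc]; omega
    have hu := exists_user_s2 hmem (by omega) (Nat.sub_le m t)
    rcases le_total m (smin + (m - t - smax) + 2 * t - 2) with h | h
    · rw [min_eq_left h]
      refine ⟨1, le_rfl, exists_uncoded_s2 (fun s hs => ?_) hu⟩
      simp only [Finset.mem_union, Finset.mem_range, Finset.mem_Icc] at hs
      omega
    · rw [min_eq_right h, show smin + (m - t - smax) + 2 * t - 2
        = (smin - 1 + t) + (m - smax - 1) by omega]
      refine exists_coded (by omega) (by omega) hmem (fun s hs => ?_) hu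
      simp only [Finset.mem_union, Finset.mem_range, Finset.mem_Icc] at hs
      omega
  · rintro _ ⟨κ, hκ, code, hv, rfl⟩
    obtain ⟨E, hE, hcl⟩ := exists_small_generator ht h1 h2 h3 code hv
    have hcount := code.card_le_of_cl_univ hcl
    have hm : min m (smin + (m - t - smax) + 2 * t - 2) + E.card ≤ m := by omega
    have hκ' : (0 : ℝ) < κ := by exact_mod_cast hκ
    rw [DecCode.normLen, le_div_iff₀ hκ']
    have := Nat.mul_le_mul_left κ hm
    rw [mul_add] at this
    have hle : min m (smin + (m - t - smax) + 2 * t - 2) * κ ≤ ∑ τ, code.c τ := by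
      rw [mul_comm]; omega
    exact_mod_cast hle
end

section
/- Let t, ℓ, c be integers with 1 ≤ t, t + 1 ≤ ℓ, and ℓ < c. Then there exist a finite field F and a matrix C ∈ F^{ℓ×c} such that (i) every row of C has at most c − t nonzero entries, and (ii) for every subset of ℓ columns of C, the corresponding ℓ×ℓ submatrix is invertible (equivalently, C generates an MDS code with the prescribed row sparsity). -/
/-!
A systematic generator matrix of a Reed–Solomon code already has enough zeros. Over `ZMod p` with
`p > c` prime, let `V i j = j ^ i` be the `ℓ × c` Vandermonde matrix at the distinct points
`0, …, c - 1`, and let `V₁` be its first `ℓ` columns. Then `C = V₁⁻¹ * V = [I | A]`. Every `ℓ × ℓ`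
column-submatrix of `C` is `V₁⁻¹` times a square Vandermonde matrix with distinct nodes, so it is
invertible; and every row of the identity block contains `ℓ - 1 ≥ t` zeros.
-/

open scoped BigOperators

/-- for integers `1 ≤ t`, `t + 1 ≤ ℓ < c`, there exist a finite field `F` and
an `ℓ × c` matrix `C` over `F` such that every row of `C` has at most `c - t` nonzero
entries, and every `ℓ × ℓ` submatrix obtained by selecting `ℓ` distinct columns of `C` is
invertible (the sparse MDS property). -/
theorem sparse_mds_matrix_exists (t ℓ c : ℕ) (ht : 1 ≤ t) (hℓ : t + 1 ≤ ℓ) (hc : ℓ < c) :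
    ∃ (F : Type) (_ : Field F) (_ : Fintype F) (C : Matrix (Fin ℓ) (Fin c) F),
      (∀ i : Fin ℓ, {j : Fin c | C i j ≠ 0}.ncard ≤ c - t) ∧
      (∀ e : Fin ℓ → Fin c, Function.Injective e → IsUnit (C.submatrix id e).det) := by
  obtain ⟨p, hpc, hp⟩ := Nat.exists_infinite_primes (c + 1)
  have : Fact p.Prime := ⟨hp⟩
  let V : Matrix (Fin ℓ) (Fin c) (ZMod p) := fun i j => ((j : ℕ) : ZMod p) ^ (i : ℕ)
  have hinj : Function.Injective (fun j : Fin c => ((j : ℕ) : ZMod p)) := by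
    intro a b hab
    have h := (ZMod.natCast_eq_natCast_iff' _ _ _).1 hab
    rw [Nat.mod_eq_of_lt (by omega), Nat.mod_eq_of_lt (by omega)] at h
    exact Fin.ext h
  have hV : ∀ e : Fin ℓ → Fin c, Function.Injective e → IsUnit (V.submatrix id e).det := by
    intro e he
    have h : V.submatrix id e
        = (Matrix.vandermonde (fun k => ((e k : ℕ) : ZMod p))).transpose := by
      ext i j
      rw [Matrix.transpose_apply, Matrix.vandermonde_apply]
      rfl
    rw [h, Matrix.det_transpose, isUnit_iff_ne_zero, Matrix.det_vandermonde_ne_zero_iff]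
    exact hinj.comp he
  let e₁ : Fin ℓ → Fin c := Fin.castLE hc.le
  have he₁ : Function.Injective e₁ := Fin.castLE_injective hc.le
  have hV₁ := hV e₁ he₁
  have hsub : ∀ e : Fin ℓ → Fin c, ((V.submatrix id e₁)⁻¹ * V).submatrix id e
      = (V.submatrix id e₁)⁻¹ * V.submatrix id e := fun e => rfl
  refine ⟨ZMod p, inferInstance, inferInstance, (V.submatrix id e₁)⁻¹ * V, ?_, ?_⟩
  · intro i
    have hone : ∀ k, ((V.submatrix id e₁)⁻¹ * V) i (e₁ k)
        = (1 : Matrix (Fin ℓ) (Fin ℓ) (ZMod p)) i k := by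
      intro k
      rw [← Matrix.nonsing_inv_mul _ hV₁]
      rfl
    -- The support of row `i` avoids the columns of the identity block other than the `i`-th.
    have hle : {j : Fin c | ((V.submatrix id e₁)⁻¹ * V) i j ≠ 0}
        ⊆ (((Finset.univ.erase i).image e₁)ᶜ : Finset (Fin c)) := by
      intro j hj
      simp only [Finset.coe_compl, Set.mem_compl_iff, Finset.mem_coe, Finset.mem_image,
        Finset.mem_erase, Finset.mem_univ, and_true, not_exists, not_and]
      rintro k hk rfl
      exact hj (by rw [hone, Matrix.one_apply_ne (Ne.symm hk)])
    refine (Set.ncard_le_ncard hle (Finset.finite_toSet _)).trans ?_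
    rw [Set.ncard_coe_finset, Finset.card_compl, Finset.card_image_of_injective _ he₁,
      Finset.card_erase_of_mem (Finset.mem_univ i), Finset.card_univ, Fintype.card_fin,
      Fintype.card_fin]
    omega
  · intro e he
    rw [hsub, Matrix.det_mul]
    exact (Matrix.isUnit_nonsing_inv_det _ hV₁).mul (hV e he)
end

section
/- Let t ≥ 1 and s_max ≥ 1 be integers, set q = s_max + t, and for each integer i with 0 ≤ i ≤ ℓ−1 (where ℓ ≤ q) define Z_i = { j ∈ {0,…,q−1} : s_max ≤ (i + j) mod q ≤ q−1 }. Then for every nonempty set P ⊆ {0,…,ℓ−1} such that ⋂_{i∈P} Z_i is nonempty, one has |P| + |⋂_{i∈P} Z_i| ≤ t + 1; equivalently, the intersection of |P| distinct cyclic shifts of the arc Z_0 has size at most t − (|P| − 1). -/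
/-!
Put `q = smax + t`. Fix a point `j₀` of the intersection `J`. For `i ∈ P` the residue
`p = (i + j₀) mod q` lies in `[smax, q)`, so the offsets `d ∈ [0, q)` that send it into the
complementary arc `[0, smax)` form the genuine interval `[q - p, q - p + smax) ⊆ [0, q)`, with no
wrap-around. The set of excluded offsets is therefore an integer sumset
`{q - p} + [0, smax)`, which has at least `|P| + smax - 1` elements by the Cauchy–Davenport
inequality in a linearly ordered cancellative monoid. The offsets `(j - j₀) mod q` of the points
`j ∈ J` avoid it, hence `|J| + |P| + smax - 1 ≤ q`.
-/

open scoped BigOperators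

/-- The zero set of the `i`-th row of the zero-pattern matrix: with `q = smax + t`,
`Z i = { j ∈ [0 : q - 1] : smax ≤ (i + j) mod q ≤ q - 1 }`, a cyclic arc of length `t`. -/
def Zset (smax t i : ℕ) : Finset ℕ :=
  (Finset.range (smax + t)).filter
    (fun j => smax ≤ (i + j) % (smax + t) ∧ (i + j) % (smax + t) ≤ smax + t - 1)

open scoped Pointwise in
/-- the "MDS condition": for `t ≥ 1`, `smax ≥ 1`, `q = smax + t`, `ℓ ≤ q`,
and every nonempty `P ⊆ [0 : ℓ - 1]` whose associated zero sets have a nonempty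
intersection, `|P| + |⋂_{i ∈ P} Z i| ≤ t + 1`. -/
theorem zero_pattern_mds_condition (t smax ℓ : ℕ) (ht : 1 ≤ t) (hs : 1 ≤ smax)
    (hℓ : ℓ ≤ smax + t) (P : Finset ℕ) (hP : P ⊆ Finset.range ℓ) (hPne : P.Nonempty)
    (hint : (P.inf' hPne (Zset smax t)).Nonempty) :
    P.card + (P.inf' hPne (Zset smax t)).card ≤ t + 1 := by
  have hJ : ∀ j ∈ P.inf' hPne (Zset smax t), j < smax + t ∧
      ∀ i ∈ P, smax ≤ (i + j) % (smax + t) := by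
    intro j hj
    have key : ∀ i ∈ P, j ∈ Zset smax t i := fun i hi => Finset.inf'_le (Zset smax t) hi hj
    simp only [Zset, Finset.mem_filter, Finset.mem_range] at key
    exact ⟨(key _ hPne.choose_spec).1, fun i hi => (key i hi).2.1⟩
  have hPlt : ∀ i ∈ P, i < smax + t := fun i hi =>
    lt_of_lt_of_le (Finset.mem_range.1 (hP hi)) hℓ
  generalize P.inf' hPne (Zset smax t) = J at *
  obtain ⟨j₀, hj₀⟩ := hint
  obtain ⟨hj₀q, hj₀P⟩ := hJ j₀ hj₀
  generalize hq : smax + t = q at *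
  -- All sums reduced below are less than `2 * q`, so reduction mod `q` subtracts `q` at most once.
  have hmod : ∀ a, a < 2 * q → (a < q ∧ a % q = a) ∨ (q ≤ a ∧ a % q = a - q) := by
    intro a ha
    rcases lt_or_ge a q with h | h
    · exact Or.inl ⟨h, Nat.mod_eq_of_lt h⟩
    · exact Or.inr ⟨h, by rw [Nat.mod_eq_sub_mod h, Nat.mod_eq_of_lt (by omega)]⟩
  set R : Finset ℕ := P.image (fun i => q - (i + j₀) % q) with hR
  set D : Finset ℕ := J.image (fun j => (j + q - j₀) % q) with hD
  have hRcard : R.card = P.card := by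
    refine Finset.card_image_of_injOn fun a ha b hb hab => ?_
    have h1 := hPlt a ha
    have h2 := hPlt b hb
    have h3 := hmod (a + j₀) (by omega)
    have h4 := hmod (b + j₀) (by omega)
    omega
  have hDcard : D.card = J.card := by
    refine Finset.card_image_of_injOn fun a ha b hb hab => ?_
    have h1 := (hJ a ha).1
    have h2 := (hJ b hb).1
    have h3 := hmod (a + q - j₀) (by omega)
    have h4 := hmod (b + q - j₀) (by omega)
    omega
  have hB : R.card + (Finset.range smax).card - 1 ≤ (R + Finset.range smax).card :=
    cauchy_davenport_add_of_linearOrder_isCancelAdd (hPne.image _)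
      (Finset.nonempty_range_iff.2 (by omega))
  have hdisj : Disjoint D (R + Finset.range smax) := by
    rw [Finset.disjoint_left]
    intro d hd hdB
    obtain ⟨r, hr, k, hk, hrk⟩ := Finset.mem_add.1 hdB
    obtain ⟨i, hi, rfl⟩ := Finset.mem_image.1 hr
    obtain ⟨j, hj, rfl⟩ := Finset.mem_image.1 hd
    rw [Finset.mem_range] at hk
    have h1 := hPlt i hi
    obtain ⟨h2, h3⟩ := hJ j hj
    -- The equation between offsets forces `(i + j) % q = k < smax`.
    have h4 := h3 i hi
    have h5 := hj₀P i hi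
    have h6 := hmod (i + j) (by omega)
    have h7 := hmod (i + j₀) (by omega)
    have h8 := hmod (j + q - j₀) (by omega)
    omega
  have hsub : D ∪ (R + Finset.range smax) ⊆ Finset.range q := by
    refine Finset.union_subset (fun d hd => ?_) (fun d hd => ?_)
    · obtain ⟨j, hj, rfl⟩ := Finset.mem_image.1 hd
      exact Finset.mem_range.2 (Nat.mod_lt _ (by omega))
    · obtain ⟨r, hr, k, hk, rfl⟩ := Finset.mem_add.1 hd
      obtain ⟨i, hi, rfl⟩ := Finset.mem_image.1 hr
      -- No wrap-around: the residue of `i + j₀` is at least `smax`.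
      have h1 := hj₀P i hi
      have h2 := Nat.mod_lt (i + j₀) (show 0 < q by omega)
      rw [Finset.mem_range] at hk ⊢
      omega
  have hcard := Finset.card_le_card hsub
  rw [Finset.card_union_of_disjoint hdisj, Finset.card_range] at hcard
  rw [Finset.card_range] at hB
  omega
end

section
/- Let Σ be a nonempty finite type, let m ≥ 1, and let A, D ⊆ {1,…,m} be disjoint sets. Let Y be a finite type, and suppose there are functions f : ({1,…,m} → Σ) → Y and d : Y × (A → Σ) → (D → Σ) such that d(f(w), w|_A) = w|_D for every w : {1,…,m} → Σ. Then |Y| ≥ |Σ|^{|D|}. -/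
open scoped BigOperators

/-!
Fix a symbol `s₀`: among the tuples equal to `s₀` at every coordinate off `D`, the restriction to
`A` is always the same because `A` and `D` are disjoint. On these `|σ| ^ |D|` tuples the decoder
recovers the tuple from the value of `f` alone, so `f` is injective there.
-/

/-- counting form of the converse: if the pair `(f w, w|_A)` determines
`w|_D` for disjoint `A, D ⊆ [m]`, then `f` takes at least `|σ| ^ |D|` values. -/
theorem decoder_counting_bound {σ : Type*} [Fintype σ] [Nonempty σ]
    (m : ℕ) (hm : 1 ≤ m) (A D : Finset (Fin m)) (hAD : Disjoint A D)
    {Y : Type*} [Fintype Y]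
    (f : (Fin m → σ) → Y)
    (d : Y → ((i : Fin m) → i ∈ A → σ) → (i : Fin m) → i ∈ D → σ)
    (hdec : ∀ w : Fin m → σ, ∀ i : Fin m, ∀ hi : i ∈ D,
      d (f w) (fun i _ => w i) i hi = w i) :
    Fintype.card σ ^ D.card ≤ Fintype.card Y := by
  classical
  obtain ⟨s₀⟩ := ‹Nonempty σ›
  -- Extend a tuple on `D` by the constant `s₀`: by disjointness its restriction to `A` is constant,
  -- so the value of `f` alone already determines the tuple.
  let ext (x : D → σ) (i : Fin m) : σ := if h : i ∈ D then x ⟨i, h⟩ else s₀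
  have ext_A (x : D → σ) :
      (fun (i : Fin m) (_ : i ∈ A) => ext x i) = fun _ _ => s₀ := by
    funext i hi
    exact dif_neg (Finset.disjoint_left.mp hAD hi)
  have ext_D (x : D → σ) (i : D) : ext x i = x i := dif_pos i.2
  have hinj : Function.Injective fun x : D → σ => f (ext x) := by
    intro x y hxy
    funext i
    have hx := hdec (ext x) i i.2
    have hy := hdec (ext y) i i.2
    rw [ext_A, ext_D] at hx hy
    rw [← hx, ← hy, show f (ext x) = f (ext y) from hxy]
  simpa using Fintype.card_le_of_injective _ hinj
end

section
/- In the decentralized PICOD(t) model, for every valid decentralized code and every user j, the total number of bits transmitted in rounds assigned to users other than j satisfies Σ_{τ : j(τ) ≠ j} c_τ ≥ t·κ. (In particular, by induction on rounds, all transmissions of user j are determined by its side information (w_i)_{i∈A_j} together with the transmissions of the other users, so user j must be able to decode its t desired messages from the other users' transmissions and its side information alone.) -/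
/-!
Given the side information of user `j`, the rounds of the other users determine the whole
transcript: by induction on rounds, causality lets user `j` reproduce its own transmissions
(`DecCode.transcript_eq_of_others_eq`). So, with the messages outside the decoded set `D` frozen to
zero, the `2 ^ (t * κ)` choices of the messages in `D` must yield distinct tuples of transmissions
by the other users, and counting such tuples gives the bound.
-/


open scoped BigOperators

/-- Two message tuples that agree on the side information of user `j` and give the same
transmissions in all rounds of the other users have the same transcript. -/
theorem DecCode.transcript_eq_of_others_eq {m κ : ℕ} {ι : Type*} {A : ι → Finset (Fin m)}
    (code : DecCode m κ A) (j : ι) (w w' : Fin m → Fin κ → Bool)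
    (hside : ∀ i ∈ A j, w i = w' i)
    (hothers : ∀ τ, code.sender τ ≠ j → code.X w τ = code.X w' τ) :
    code.X w = code.X w' := by
  funext τ
  induction τ using WellFoundedLT.induction with
  | ind τ ih =>
    by_cases hτ : code.sender τ = j
    · exact code.causal w w' τ (by rwa [hτ]) ih
    · exact hothers τ hτ

/-- per-user converse: in any valid decentralized PICOD(`t`) code, for every
user `j`, the total number of bits transmitted in rounds assigned to users other than `j`
is at least `t * κ`. -/
theorem decentralized_picod_per_user_converse {m κ t : ℕ}
    (hm : 1 ≤ m) (ht : 1 ≤ t) (hκ : 1 ≤ κ)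
    {ι : Type*} [DecidableEq ι] (A : ι → Finset (Fin m)) (hA : Function.Injective A)
    (code : DecCode m κ A) (hvalid : code.Valid t) (j : ι) :
    t * κ ≤ ∑ τ ∈ Finset.univ.filter (fun τ : Fin code.T => code.sender τ ≠ j), code.c τ := by
  classical
  obtain ⟨D, hdisj, hcard, dec, hdec⟩ := hvalid j
  -- Extend a choice of the messages in `D` by zero messages outside `D`.
  let e : (D → Fin κ → Bool) → Fin m → Fin κ → Bool :=
    fun u i => if h : i ∈ D then u ⟨i, h⟩ else fun _ => false
  let F : (D → Fin κ → Bool) →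
      ((τ : {τ : Fin code.T // code.sender τ ≠ j}) → Fin (code.c τ) → Bool) :=
    fun u τ => code.X (e u) τ
  have hF : Function.Injective F := by
    intro u v huv
    have hside : ∀ i ∈ A j, e u i = e v i := by
      intro i hi
      have hiD : i ∉ D := fun h => Finset.disjoint_left.mp hdisj h hi
      simp [e, hiD]
    have hX : code.X (e u) = code.X (e v) :=
      code.transcript_eq_of_others_eq j _ _ hside fun τ hτ => congrFun huv ⟨τ, hτ⟩
    have hinfo : (fun (i : Fin m) (_ : i ∈ A j) => e u i) = fun i _ => e v i := by
      funext i hi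
      exact hside i hi
    funext ⟨i, hi⟩
    have h : e u i = e v i := by
      rw [← hdec (e u) i hi, ← hdec (e v) i hi, hX, hinfo]
    simpa [e, hi] using h
  have hle := Fintype.card_le_of_injective F hF
  have hdom : Fintype.card (D → Fin κ → Bool) = 2 ^ (t * κ) := by
    simp [hcard, ← pow_mul, mul_comm]
  have hcod : Fintype.card
      ((τ : {τ : Fin code.T // code.sender τ ≠ j}) → Fin (code.c τ) → Bool) =
      2 ^ ∑ τ ∈ Finset.univ.filter (fun τ : Fin code.T => code.sender τ ≠ j), code.c τ := by
    rw [Fintype.card_pi, ← Finset.prod_pow_eq_pow_sum]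
    simp only [Fintype.card_fun, Fintype.card_bool, Fintype.card_fin]
    exact (Finset.prod_subtype _ (by simp) (fun τ : Fin code.T => 2 ^ code.c τ)).symm
  rw [hdom, hcod] at hle
  exact (Nat.pow_le_pow_iff_right (by norm_num)).mp hle
end

section
/- In the decentralized PICOD(t) model with n ≥ 2 users, every valid decentralized code satisfies (n − 1)·(c_1 + ⋯ + c_T) ≥ n·t·κ; equivalently, its normalized length is at least n·t/(n − 1), which is strictly greater than t. -/
/-!
Fix a user `j` with decoded set `D`, and let the messages in `D` vary while all others are held
constant. The side information of `j` is then constant, so the rounds in which `j` itself transmits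
are determined by the other rounds (induction on the round, by causality). Since `j` decodes `D`,
the rounds of the *other* users determine the `tκ` free bits, so the lengths of those rounds sum to
at least `tκ` (`DecCode.le_sum_others`). Summing over the `n` users counts every round exactly
`n - 1` times, once for each user that is not its sender.
-/

open scoped BigOperators

namespace DecCode

variable {m κ : ℕ} {ι : Type*} {A : ι → Finset (Fin m)}

/-- For message tuples that agree on the side information of `j`, the transcript is determined by
the rounds in which users other than `j` transmit. -/
lemma X_eq_of_others (code : DecCode m κ A) (j : ι) {w w' : Fin m → Fin κ → Bool}
    (hA : ∀ i ∈ A j, w i = w' i)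
    (h : ∀ τ, code.sender τ ≠ j → code.X w τ = code.X w' τ) :
    code.X w = code.X w' := by
  funext τ
  induction τ using WellFoundedLT.induction with
  | ind τ ih =>
    by_cases hs : code.sender τ = j
    · exact code.causal w w' τ (by rw [hs]; exact hA) ih
    · exact h τ hs

/-- The users other than `j` must transmit all the `t * κ` bits which `j` decodes. -/
lemma le_sum_others [DecidableEq ι] {t : ℕ} (code : DecCode m κ A) (hv : code.Valid t) (j : ι) :
    t * κ ≤ ∑ τ : {τ // code.sender τ ≠ j}, code.c τ := by
  obtain ⟨D, hdisj, hcard, dec, hdec⟩ := hv j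
  -- the messages in `D` are free, the others are set to zero
  let e : (D → Fin κ → Bool) → Fin m → Fin κ → Bool :=
    fun v i => if hi : i ∈ D then v ⟨i, hi⟩ else fun _ => false
  let f : (D → Fin κ → Bool) → (τ : {τ // code.sender τ ≠ j}) → Fin (code.c τ) → Bool :=
    fun v τ => code.X (e v) τ
  have hf : Function.Injective f := by
    intro v v' hvv
    have hA : ∀ i ∈ A j, e v i = e v' i := by
      intro i hi
      have : i ∉ D := fun hD => Finset.disjoint_left.1 hdisj hD hi
      simp [e, this]
    have hX : code.X (e v) = code.X (e v') :=
      code.X_eq_of_others j hA fun τ hτ => congrFun hvv ⟨τ, hτ⟩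
    funext ⟨i, hi⟩
    have h1 := hdec (e v) i hi
    have h2 := hdec (e v') i hi
    have hside : (fun i (_ : i ∈ A j) => e v i) = fun i _ => e v' i := by
      funext i hi
      exact hA i hi
    rw [hX, hside, h2] at h1
    simpa [e, hi] using h1.symm
  have hle := Fintype.card_le_of_injective f hf
  simp only [Fintype.card_pi, Fintype.card_bool, Finset.prod_const, Finset.card_univ,
    Fintype.card_fin, Fintype.card_coe, hcard, Finset.prod_pow_eq_pow_sum, ← pow_mul] at hle
  rw [mul_comm]
  exact (Nat.pow_le_pow_iff_right (by norm_num)).1 hle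

end DecCode

/-- global converse: in the decentralized PICOD(`t`) model with `n ≥ 2`
users, every valid code satisfies `(n - 1) * (c_1 + ⋯ + c_T) ≥ n * t * κ`; equivalently its
normalized length is at least `n * t / (n - 1)`, which is strictly greater than `t`. -/
theorem decentralized_picod_global_converse {m κ t n : ℕ}
    (hm : 1 ≤ m) (ht : 1 ≤ t) (hκ : 1 ≤ κ) (hn : 2 ≤ n)
    (A : Fin n → Finset (Fin m)) (hA : Function.Injective A)
    (code : DecCode m κ A) (hvalid : code.Valid t) :
    n * t * κ ≤ (n - 1) * ∑ τ : Fin code.T, code.c τ ∧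
    ((n : ℝ) * t) / ((n : ℝ) - 1) ≤ code.normLen ∧
    (t : ℝ) < ((n : ℝ) * t) / ((n : ℝ) - 1) := by
  have key : n * t * κ ≤ (n - 1) * ∑ τ : Fin code.T, code.c τ := by
    calc n * t * κ = ∑ _j : Fin n, t * κ := by simp [mul_assoc]
      _ ≤ ∑ j : Fin n, ∑ τ : {τ // code.sender τ ≠ j}, code.c τ :=
        Finset.sum_le_sum fun j _ => code.le_sum_others hvalid j
      _ = ∑ j : Fin n, ∑ τ : Fin code.T, if j ≠ code.sender τ then code.c τ else 0 := by
        refine Finset.sum_congr rfl fun j _ => ?_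
        rw [← Finset.sum_filter]
        exact (Finset.sum_subtype _ (by simp [ne_comm]) _).symm
      _ = ∑ τ : Fin code.T, (n - 1) * code.c τ := by
        rw [Finset.sum_comm]
        refine Finset.sum_congr rfl fun τ _ => ?_
        rw [← Finset.sum_filter, Finset.sum_const, Finset.filter_ne',
          Finset.card_erase_of_mem (Finset.mem_univ _)]
        simp
      _ = (n - 1) * ∑ τ : Fin code.T, code.c τ := Finset.mul_sum .. |>.symm
  have hn' : (2 : ℝ) ≤ n := by exact_mod_cast hn
  have hpos : (0 : ℝ) < (n : ℝ) - 1 := by linarith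
  have hκ' : (0 : ℝ) < κ := by exact_mod_cast hκ
  have ht' : (0 : ℝ) < t := by exact_mod_cast ht
  refine ⟨key, ?_, ?_⟩
  · have keyR : (n : ℝ) * t * κ ≤ ((n : ℝ) - 1) * ∑ τ : Fin code.T, (code.c τ : ℝ) := by
      have := (Nat.cast_le (α := ℝ)).2 key
      rw [Nat.cast_mul (n - 1), Nat.cast_sub (by omega)] at this
      exact_mod_cast this
    rw [DecCode.normLen, div_le_div_iff₀ hpos hκ']
    linarith
  · rw [lt_div_iff₀ hpos]
    linarith
end

section
/- For the decentralized complete–S PICOD(t) problem with m messages and S = {m−t}, where 1 ≤ t ≤ m−1, and n = C(m, m−t) users, there exist a message length κ ≥ 1 and a valid decentralized code of normalized length exactly n·t/(n−1); consequently ℓ* ≤ n·t/(n−1). (Such a code is vector linear: each message is split into n−1 sub-messages and each user transmits linear combinations of the sub-messages in its side information, so that every user can decode all t·(n−1) sub-messages not in its side information.) -/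
/-!
Since every side-information set has `m - t` elements, every user must decode all the messages it
lacks, so the task is to make everybody omniscient.  Split each message into `N = n - 1` symbols of
a finite field `F` of characteristic two, and let every user transmit `t` linear combinations of
the symbols it knows.

The users other than `j` transmit `(n - 1) * t` symbols, exactly as many as `j` is missing, and `j`
can decode as soon as a certain square matrix is invertible.  With indeterminate coefficients its
determinant is a nonzero polynomial whenever the missing symbols can be matched injectively with
transmissions in which they may occur (`decodePoly_ne_zero`).  Hall's theorem supplies the matching
(`exists_matching`): if a set of missing symbols involves `p` messages, then all users can help
except the `choose (m - p) (m - t)` users having none of these messages, and Hall's condition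
`p * (n - 1) ≤ t * (n - choose (m - p) (m - t))` is the convexity of `p ↦ choose (m - p) (m - t)`,
which runs from `n` at `p = 0` to `1` at `p = t` (`choose_convex`).

Finitely many nonzero polynomials over `ZMod 2` have a common nonzero in a large enough finite
field of characteristic two (`exists_common_nonzero`), which gives coefficients that serve all users
at once.  Field elements are turned into bits by an arbitrary bijection.
-/

open scoped BigOperators

/-! ### Common nonzeros over finite fields -/

open MvPolynomial in
/-- Finitely many nonzero polynomials over `ZMod 2` are simultaneously nonzero at some point with
coordinates in a finite extension. -/
lemma exists_common_nonzero {σ ι : Type*} [Finite σ] [Fintype ι]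
    (P : ι → MvPolynomial σ (ZMod 2)) (hP : ∀ j, P j ≠ 0) :
    ∃ k : ℕ, k ≠ 0 ∧ ∃ a : σ → GaloisField 2 k, ∀ j, aeval a (P j) ≠ 0 := by
  classical
  set Q := ∏ j, P j with hQ
  have hQ0 : Q ≠ 0 := Finset.prod_ne_zero_iff.mpr fun j _ => hP j
  refine ⟨Q.totalDegree + 1, by omega, ?_⟩
  set k := Q.totalDegree + 1 with hk
  let _ : Fintype (GaloisField 2 k) := Fintype.ofFinite _
  by_contra! hcon
  have hz : map (algebraMap (ZMod 2) (GaloisField 2 k)) Q = 0 := by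
    refine eq_zero_of_eval_zero_at_prod_finset _ (fun _ => Finset.univ) ?_ ?_
    · intro i
      have h1 : Finset.card (Finset.univ : Finset (GaloisField 2 k)) = 2 ^ k := by
        rw [Finset.card_univ, ← Nat.card_eq_fintype_card, GaloisField.card 2 k (by omega)]
      have h2 := degreeOf_le_totalDegree (map (algebraMap (ZMod 2) (GaloisField 2 k)) Q) i
      have h3 : (map (algebraMap (ZMod 2) (GaloisField 2 k)) Q).totalDegree ≤ Q.totalDegree :=
        Finset.sup_mono (support_map_subset _ _)
      have h4 : k < 2 ^ k := Nat.lt_two_pow_self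
      omega
    · intro a _
      obtain ⟨j, hj⟩ := hcon a
      rw [eval_map, ← aeval_def, hQ, map_prod]
      exact Finset.prod_eq_zero (Finset.mem_univ j) hj
  exact hQ0 (map_injective _ (algebraMap (ZMod 2) (GaloisField 2 k)).injective (by simpa using hz))

/-! ### Hall's condition -/

/-- The increment of `q ↦ choose (d + 1 + q) (d + 1)` at `q` is at least its average increment
over `{0, …, q - 1}`. -/
lemma choose_le_one_add (d q : ℕ) :
    (d + 1 + q).choose (d + 1) ≤ 1 + q * (d + 1 + q).choose d := by
  induction q with
  | zero => simp
  | succ q ih =>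
    have h1 : (d + 1 + (q + 1)).choose (d + 1)
        = (d + 1 + q).choose d + (d + 1 + q).choose (d + 1) := Nat.choose_succ_succ _ _
    have h2 : (d + 1 + q).choose d ≤ (d + 1 + (q + 1)).choose d :=
      Nat.choose_le_choose d (by omega)
    nlinarith

/-- Convexity of `q ↦ choose (d + 1 + q) (d + 1)`: on `{0, …, t}` it lies below its chord. -/
lemma choose_convex (d q t : ℕ) (h : q ≤ t) :
    t * (d + 1 + q).choose (d + 1) + q ≤ q * (d + 1 + t).choose (d + 1) + t := by
  induction t, h using Nat.le_induction with
  | base => exact le_rfl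
  | succ t hqt ih =>
    have h1 : (d + 1 + (t + 1)).choose (d + 1)
        = (d + 1 + t).choose d + (d + 1 + t).choose (d + 1) := Nat.choose_succ_succ _ _
    have h2 := choose_le_one_add d q
    have h3 : (d + 1 + q).choose d ≤ (d + 1 + t).choose d := Nat.choose_le_choose d (by omega)
    nlinarith [Nat.mul_le_mul_left q h3]

instance (m : ℕ) (S : Finset ℕ) : Fintype (CompleteS m S) :=
  inferInstanceAs (Fintype {B : Finset (Fin m) // B.card ∈ S})

/-- The number of users having none of the messages in `P`. -/
lemma card_completeS_disjoint (m d : ℕ) (P : Finset (Fin m)) :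
    (Finset.univ.filter fun u : CompleteS m {d} => Disjoint P u.val).card
      = (m - P.card).choose d := by
  classical
  have : (m - P.card).choose d = (Finset.powersetCard d Pᶜ).card := by
    rw [Finset.card_powersetCard, Finset.card_compl, Fintype.card_fin]
  rw [this]
  refine Finset.card_bij (fun u _ => u.val) ?_ ?_ ?_
  · intro u hu
    have := Finset.mem_singleton.mp u.2
    simp only [Finset.mem_filter, Finset.mem_univ, true_and] at hu
    exact Finset.mem_powersetCard.mpr ⟨Finset.subset_compl_iff_disjoint_left.mpr hu, this⟩
  · intro u _ v _ h
    exact Subtype.ext h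
  · intro B hB
    obtain ⟨h1, h2⟩ := Finset.mem_powersetCard.mp hB
    exact ⟨⟨B, by simpa using h2⟩,
      Finset.mem_filter.mpr ⟨Finset.mem_univ _, Finset.subset_compl_iff_disjoint_left.mp h1⟩, rfl⟩

lemma card_completeS (m d : ℕ) : Fintype.card (CompleteS m {d}) = m.choose d := by
  simpa using card_completeS_disjoint m d ∅

/-- The sub-messages `c` that user `j` lacks can be matched with distinct transmissions
`(u, b)` (the `b`-th one of user `u`) whose sender knows them. -/
lemma exists_matching_s11 (m t : ℕ) (ht : 1 ≤ t) (ht' : t ≤ m - 1) (j : CompleteS m {m - t}) :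
    ∃ f : Fin m × Fin (m.choose (m - t) - 1) → CompleteS m {m - t} × Fin t,
      (∀ c, c.1 ∉ j.val → c.1 ∈ (f c).1.val) ∧
      Set.InjOn f {c | c.1 ∉ j.val} := by
  classical
  set N := m.choose (m - t) - 1 with hN
  let nb : {c : Fin m × Fin N // c.1 ∉ j.val} → Finset (CompleteS m {m - t} × Fin t) :=
    fun c => (Finset.univ.filter fun u : CompleteS m {m - t} => c.1.1 ∈ u.val) ×ˢ Finset.univ
  have hall : ∀ s : Finset {c : Fin m × Fin N // c.1 ∉ j.val}, s.card ≤ (s.biUnion nb).card := by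
    intro s
    set P : Finset (Fin m) := s.image fun c => c.1.1 with hP
    have hs : s.card ≤ P.card * N := by
      have : s.card ≤ (P ×ˢ (Finset.univ : Finset (Fin N))).card := by
        refine Finset.card_le_card_of_injOn (fun c => c.1) ?_ (Subtype.val_injective.injOn)
        intro c hc
        simp only [Finset.coe_product, Set.mem_prod, Finset.mem_coe, Finset.mem_univ, and_true]
        exact Finset.mem_image_of_mem _ hc
      simpa using this
    have hPj : P.card ≤ t := by
      have h1 : P ⊆ (j.val)ᶜ := by
        intro i hi
        obtain ⟨c, _, rfl⟩ := Finset.mem_image.mp hi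
        exact Finset.mem_compl.mpr c.2
      have h2 := Finset.card_le_card h1
      rw [Finset.card_compl, Fintype.card_fin, Finset.mem_singleton.mp j.2] at h2
      omega
    have hb : s.biUnion nb
        = (Finset.univ.filter fun u : CompleteS m {m - t} => ¬ Disjoint P u.val)
            ×ˢ Finset.univ := by
      ext ⟨u, b⟩
      simp only [nb, Finset.mem_biUnion, Finset.mem_product, Finset.mem_filter, Finset.mem_univ,
        true_and, and_true, Finset.not_disjoint_iff, hP, Finset.mem_image]
      constructor
      · rintro ⟨c, hc, h⟩
        exact ⟨_, ⟨c, hc, rfl⟩, h⟩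
      · rintro ⟨_, ⟨c, hc, rfl⟩, h⟩
        exact ⟨c, hc, h⟩
    have hsum := Finset.card_filter_add_card_filter_not (s := Finset.univ)
      (fun u : CompleteS m {m - t} => Disjoint P u.val)
    rw [card_completeS_disjoint, Finset.card_univ, card_completeS] at hsum
    rw [hb, Finset.card_product, Finset.card_univ, Fintype.card_fin]
    refine hs.trans ?_
    generalize (Finset.univ.filter fun u : CompleteS m {m - t} => ¬ Disjoint P u.val).card = x
      at hsum ⊢
    have hc := choose_convex (m - t - 1) (t - P.card) t (by omega)
    rw [show m - t - 1 + 1 = m - t by omega, show m - t + (t - P.card) = m - P.card by omega,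
      show m - t + t = m by omega] at hc
    have hn : m.choose (m - t) = N + 1 := by
      have : 0 < m.choose (m - t) := Nat.choose_pos (by omega)
      omega
    rw [hn] at hsum hc
    obtain ⟨q, hq⟩ : ∃ q, t = P.card + q := ⟨t - P.card, by omega⟩
    rw [show t - P.card = q by omega] at hc
    nlinarith
  obtain ⟨f, hf, hfn⟩ := (Finset.all_card_le_biUnion_card_iff_exists_injective nb).mp hall
  refine ⟨fun c => if h : c.1 ∉ j.val then f ⟨c, h⟩ else (j, ⟨0, ht⟩), ?_, ?_⟩
  · intro c hc
    have := hfn ⟨c, hc⟩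
    simp only [nb, Finset.mem_product, Finset.mem_filter, Finset.mem_univ, true_and,
      and_true] at this
    simpa only [dif_pos hc] using this
  · intro c hc c' hc' h
    simp only [Set.mem_ofPred_eq] at hc hc'
    simp only [dif_pos hc, dif_pos hc'] at h
    simpa using hf h

/-! ### Decoding matrices -/

section Decoding

variable {m N t : ℕ} {ι : Type*}

/-- The decoding matrix of a user with side information `B`, with coefficients `a`: the row of a
sub-message `c` known to the user is a unit vector, and the row of an unknown one is the transmission
`f c`, in which only the messages in `A (f c).1` occur. -/
def decodeMatrix {R : Type*} [CommRing R] (A : ι → Finset (Fin m)) (B : Finset (Fin m))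
    (f : Fin m × Fin N → ι × Fin t) (a : (ι × Fin t) × (Fin m × Fin N) → R) :
    Matrix (Fin m × Fin N) (Fin m × Fin N) R :=
  Matrix.of fun c c' =>
    if c.1 ∈ B then (if c = c' then 1 else 0)
    else if c'.1 ∈ A (f c).1 then a (f c, c') else 0

/-- The determinant of the decoding matrix with indeterminate coefficients. -/
noncomputable def decodePoly (A : ι → Finset (Fin m)) (B : Finset (Fin m))
    (f : Fin m × Fin N → ι × Fin t) :
    MvPolynomial ((ι × Fin t) × (Fin m × Fin N)) (ZMod 2) :=
  (decodeMatrix A B f MvPolynomial.X).det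

lemma aeval_decodePoly {F : Type*} [Field F] [Algebra (ZMod 2) F] (A : ι → Finset (Fin m))
    (B : Finset (Fin m)) (f : Fin m × Fin N → ι × Fin t)
    (a : (ι × Fin t) × (Fin m × Fin N) → F) :
    MvPolynomial.aeval a (decodePoly A B f) = (decodeMatrix A B f a).det := by
  rw [decodePoly, AlgHom.map_det]
  congr 1
  ext c c'
  simp only [decodeMatrix, AlgHom.mapMatrix_apply, Matrix.map_apply, Matrix.of_apply]
  split_ifs <;> simp

lemma decodePoly_ne_zero (A : ι → Finset (Fin m)) (B : Finset (Fin m))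
    (f : Fin m × Fin N → ι × Fin t) (hf : ∀ c, c.1 ∉ B → c.1 ∈ A (f c).1)
    (hinj : Set.InjOn f {c | c.1 ∉ B}) : decodePoly A B f ≠ 0 := by
  classical
  intro h0
  -- Sending every matched sub-message uncoded turns the decoding matrix into the identity.
  let a : (ι × Fin t) × (Fin m × Fin N) → ZMod 2 :=
    fun v => if v.2.1 ∉ B ∧ v.1 = f v.2 then 1 else 0
  have h1 : decodeMatrix A B f a = 1 := by
    ext c c'
    simp only [decodeMatrix, Matrix.of_apply, Matrix.one_apply, a]
    by_cases hc : c.1 ∈ B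
    · simp [hc]
    · rw [if_neg hc]
      by_cases hcc : c = c'
      · subst hcc
        simp [hc, hf c hc]
      · have : ¬ (c'.1 ∉ B ∧ f c = f c') := fun h => hcc (hinj hc h.1 h.2)
        rw [if_neg this, if_neg hcc, ite_self]
  have h2 := aeval_decodePoly A B f a
  rw [h0, h1] at h2
  simp at h2

/-- If the decoding matrix is invertible, sub-messages that vanish on the side information and for
which all transmissions vanish are zero. -/
lemma eq_zero_of_decode {F : Type*} [Field F] (A : ι → Finset (Fin m))
    (B : Finset (Fin m)) (f : Fin m × Fin N → ι × Fin t)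
    (a : (ι × Fin t) × (Fin m × Fin N) → F) (hdet : (decodeMatrix A B f a).det ≠ 0)
    (x : Fin m × Fin N → F) (hx : ∀ c, c.1 ∈ B → x c = 0)
    (htr : ∀ r : ι × Fin t, ∑ c : Fin m × Fin N, (if c.1 ∈ A r.1 then a (r, c) * x c else 0) = 0) :
    x = 0 := by
  refine Matrix.eq_zero_of_mulVec_eq_zero hdet ?_
  funext c
  simp only [Matrix.mulVec, dotProduct, decodeMatrix, Matrix.of_apply, Pi.zero_apply]
  by_cases hc : c.1 ∈ B
  · simp [hc, hx c hc]
  · simpa [hc] using htr (f c)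

end Decoding

/-! ### From linear coefficients to codes -/

/-- Coefficients `a` over a field with `2 ^ k` elements from which every user can determine all
sub-messages yield a valid code with messages of `N * k` bits, in which each user transmits once,
`t * k` bits. -/
lemma exists_code {m N t k : ℕ} {ι : Type*} [Fintype ι] (A : ι → Finset (Fin m))
    (hA : ∀ j, (A j).card = m - t) (htm : t ≤ m)
    {F : Type*} [Field F] [Finite F] (hF : Nat.card F = 2 ^ k)
    (a : (ι × Fin t) × (Fin m × Fin N) → F)
    (ha : ∀ j, ∀ x : Fin m × Fin N → F, (∀ c, c.1 ∈ A j → x c = 0) →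
      (∀ r : ι × Fin t, ∑ c : Fin m × Fin N, (if c.1 ∈ A r.1 then a (r, c) * x c else 0) = 0) →
      x = 0) :
    ∃ code : DecCode m (N * k) A, code.Valid t ∧
      code.normLen = (Fintype.card ι * (t * k : ℕ) : ℝ) / (N * k : ℕ) := by
  classical
  have heq : ∀ s : ℕ, Nonempty ((Fin s → F) ≃ (Fin (s * k) → Bool)) := by
    intro s
    refine Finite.card_eq.mp ?_
    simp [Nat.card_fun, hF, ← pow_mul, mul_comm]
  obtain ⟨φ⟩ := heq N
  obtain ⟨ψ⟩ := heq t
  let e := (Fintype.equivFin ι).symm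
  -- `y w` is the tuple of field symbols of `w`, and `tr w r` is the linear combination `r`.
  let y : (Fin m → Fin (N * k) → Bool) → Fin m × Fin N → F := fun w c => φ.symm (w c.1) c.2
  let tr : (Fin m → Fin (N * k) → Bool) → ι × Fin t → F := fun w r =>
    ∑ c : Fin m × Fin N, (if c.1 ∈ A r.1 then a (r, c) * y w c else 0)
  let code : DecCode m (N * k) A :=
    { T := Fintype.card ι
      sender := e
      c := fun _ => t * k
      X := fun w τ => ψ fun b => tr w (e τ, b)
      causal := by
        intro w w' τ h _
        have : ∀ b, tr w (e τ, b) = tr w' (e τ, b) := by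
          intro b
          refine Finset.sum_congr rfl fun c _ => ?_
          split_ifs with hc
          · simp only [y, h c.1 hc]
          · rfl
        simp only [this] }
  have hinj : ∀ j w w', (∀ i ∈ A j, w i = w' i) → code.X w = code.X w' → w = w' := by
    intro j w w' h hX
    have htr : ∀ r, tr w r = tr w' r := by
      rintro ⟨u, b⟩
      have h1 : ψ (fun b => tr w (e (e.symm u), b)) = ψ fun b => tr w' (e (e.symm u), b) :=
        congrFun hX (e.symm u)
      have h2 := congrFun (ψ.injective h1) b
      simpa using h2
    have hz := ha j (y w - y w') (fun c hc => by simp [y, h c.1 hc]) (fun r => by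
      refine Eq.trans ?_ (sub_eq_zero.mpr (htr r))
      simp only [tr, ← Finset.sum_sub_distrib]
      refine Finset.sum_congr rfl fun c _ => ?_
      split_ifs <;> simp [mul_sub])
    funext i
    refine φ.symm.injective (funext fun l => ?_)
    exact sub_eq_zero.mp (congrFun hz (i, l))
  refine ⟨code, ?_, ?_⟩
  · intro j
    refine ⟨(A j)ᶜ, disjoint_compl_left, ?_, ?_⟩
    · rw [Finset.card_compl, Fintype.card_fin, hA]
      omega
    -- The decoder picks any message tuple that is consistent with what user `j` has seen.
    · refine ⟨fun X s i _ => if h : ∃ w, code.X w = X ∧ ∀ i (hi : i ∈ A j), w i = s i hi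
        then h.choose i else fun _ => false, ?_⟩
      intro w i _
      have h : ∃ w', code.X w' = code.X w ∧ ∀ i (_ : i ∈ A j), w' i = w i :=
        ⟨w, rfl, fun _ _ => rfl⟩
      refine (dif_pos h).trans ?_
      exact congrFun (hinj j _ _ h.choose_spec.2 h.choose_spec.1) i
  · simp [DecCode.normLen, code]

/-- achievability for `S = {m - t}`: with `n = C(m, m - t)` users, there
exist a message length `κ ≥ 1` and a valid decentralized code of normalized length exactly
`n * t / (n - 1)`; consequently `ℓ* ≤ n * t / (n - 1)`. -/
theorem decentralized_picod_multicast_achievability (m t : ℕ) (ht : 1 ≤ t) (ht' : t ≤ m - 1) :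
    (∃ κ : ℕ, 1 ≤ κ ∧
      ∃ code : DecCode m κ (fun B : CompleteS m {m - t} => B.val),
        code.Valid t ∧
        code.normLen =
          (Nat.choose m (m - t) : ℝ) * t / ((Nat.choose m (m - t) : ℝ) - 1)) ∧
    optLen m t {m - t} ≤
      (Nat.choose m (m - t) : ℝ) * t / ((Nat.choose m (m - t) : ℝ) - 1) := by
  classical
  set n := Nat.choose m (m - t) with hn
  have hn2 : 2 ≤ n := by
    have h0 : 0 < n := Nat.choose_pos (by omega)
    have h1 : n ≠ 1 := by
      rw [hn, Ne, Nat.choose_eq_one_iff]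
      omega
    omega
  have key : ∃ κ : ℕ, 1 ≤ κ ∧
      ∃ code : DecCode m κ (fun B : CompleteS m {m - t} => B.val),
        code.Valid t ∧ code.normLen = (n : ℝ) * t / ((n : ℝ) - 1) := by
    choose f hf hinj using exists_matching_s11 m t ht ht'
    obtain ⟨k, hk, a, ha⟩ := exists_common_nonzero
      (fun j : CompleteS m {m - t} => decodePoly (fun B : CompleteS m {m - t} => B.val) j.val (f j))
      (fun j => decodePoly_ne_zero _ _ _ (hf j) (hinj j))
    obtain ⟨code, hv, hl⟩ := exists_code (N := n - 1) (t := t) (k := k)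
      (fun B : CompleteS m {m - t} => B.val) (fun j => Finset.mem_singleton.mp j.2) (by omega)
      (GaloisField.card 2 k hk) a (fun j => eq_zero_of_decode _ _ (f j) a (by
        exact (aeval_decodePoly _ _ (f j) a) ▸ ha j))
    refine ⟨(n - 1) * k, Nat.mul_pos (by omega) (by omega), code, hv, ?_⟩
    rw [hl, card_completeS, ← hn]
    have hk' : (k : ℝ) ≠ 0 := by exact_mod_cast hk
    push_cast [Nat.cast_sub (show 1 ≤ n by omega)]
    rw [← mul_assoc, mul_div_mul_right _ _ hk']
  refine ⟨key, ?_⟩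
  obtain ⟨κ, hκ, code, hv, hl⟩ := key
  refine csInf_le ⟨0, ?_⟩ ⟨κ, hκ, code, hv, hl.symm⟩
  rintro r ⟨κ', -, code', -, rfl⟩
  exact div_nonneg (Finset.sum_nonneg fun _ _ => Nat.cast_nonneg _) (Nat.cast_nonneg _)
end

section
/- For the decentralized complete–S PICOD(t) problem with m messages and consecutive S = {s_min,…,s_max}, where 0 ≤ s_min ≤ s_max ≤ m−t and t < m − s_min < s_max + t, there exist a message length κ ≥ 1 and a valid decentralized code of normalized length m − s_min; consequently ℓ* ≤ m − s_min. (Such a code is scalar linear over a finite field F with 2^κ ≥ |F|: its generator matrix is a sparse MDS matrix of size (m−s_min)×(s_max+t), each of whose rows has at most s_max nonzero entries and can therefore be transmitted by a user whose side information contains the supporting messages.) -/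
/-!
Put `n = smax + t`, `k = m - smin`, `d = n - k`; then `0 < d`, `d + 1 ≤ smax` and `n ≤ m`.
Over `F = GF(2^n)`, let `β` be a generator of `Fˣ` and `g = ∏_{l < d} (X - β^l)`.  The code uses
the messages `0, …, n - 1` only, and its `i`-th transmission (`i < k`) is
`∑_{r ≤ d} g_r w_{i + r}`: the generator matrix is the banded generator matrix of a Reed–Solomon
code, with rows supported on windows of `d + 1 ≤ smax` consecutive messages, each of which is
contained in the side information of some user of size `smax`.

Decoding rests on `eq_zero_of_window_relations`.  The difference `v` of two message tuples with
the same transcript satisfies the linear recurrence with characteristic polynomial `g`, so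
`v j = p (β^j)` for a polynomial `p` of degree less than `d`.  If the two tuples also agree on a
side-information set of size at least `smin`, then `v` vanishes at at least
`n - (m - smin) = d` of the indices below `n`, hence `p = 0`.  So every user recovers all of the
first `n` messages, of which at least `n - smax = t` are new to it.
-/

open scoped BigOperators

open Polynomial in
/-- Any `d` zeros below `d + k` of a solution of the linear recurrence with characteristic
polynomial `g` force it to vanish; equivalently, the banded matrix with rows the shifts of `g` is MDS. -/
theorem eq_zero_of_window_relations {F : Type*} [Field F] (β : F) (d k : ℕ)
    (hd : 0 < d) (hβ : Set.InjOn (fun j : ℕ => β ^ j) (Set.Iio (d + k)))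
    (g : F[X]) (hg : g.Monic) (hgd : g.natDegree = d)
    (hroot : ∀ l < d, g.eval (β ^ l) = 0) (v : ℕ → F)
    (hv : ∀ i < k, ∑ r ∈ Finset.range (d + 1), g.coeff r * v (i + r) = 0)
    (Z : Finset ℕ) (hZ : ∀ j ∈ Z, j < d + k) (hZc : d ≤ Z.card) (hvZ : ∀ j ∈ Z, v j = 0) :
    ∀ j < d + k, v j = 0 := by
  have hinj : Set.InjOn (fun j : ℕ => β ^ j) (Finset.range d : Finset ℕ) := by
    refine hβ.mono fun j hj => ?_
    have : j < d := by simpa using hj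
    exact Set.mem_Iio.2 (by omega)
  set p : F[X] := Lagrange.interpolate (Finset.range d) (fun j : ℕ => β ^ j) v with hp
  have hpdeg : p.degree < d := by
    have := Lagrange.degree_interpolate_lt v hinj
    rwa [Finset.card_range] at this
  have hpnat : p.natDegree < d := by
    by_cases h0 : p = 0
    · simpa [h0] using hd
    · exact (natDegree_lt_iff_degree_lt h0).2 hpdeg
  have hrec : ∀ i, ∑ r ∈ Finset.range (d + 1), g.coeff r * p.eval (β ^ (i + r)) = 0 := by
    intro i
    have : ∀ r, g.coeff r * p.eval (β ^ (i + r)) =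
        ∑ l ∈ Finset.range d, p.coeff l * β ^ (i * l) * (g.coeff r * (β ^ l) ^ r) := by
      intro r
      rw [eval_eq_sum_range' hpnat, Finset.mul_sum]
      refine Finset.sum_congr rfl fun l _ => ?_
      ring
    simp_rw [this]
    rw [Finset.sum_comm]
    refine Finset.sum_eq_zero fun l hl => ?_
    rw [← Finset.mul_sum, ← eval_eq_sum_range' (by omega : g.natDegree < d + 1),
      hroot l (Finset.mem_range.1 hl), mul_zero]
  have hvp : ∀ j < d + k, v j = p.eval (β ^ j) := by
    intro j
    induction j using Nat.strong_induction_on with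
    | _ j ih =>
      intro hj
      by_cases hjd : j < d
      · exact (Lagrange.eval_interpolate_at_node v hinj (Finset.mem_range.2 hjd)).symm
      · obtain ⟨i, rfl⟩ : ∃ i, j = i + d := ⟨j - d, by omega⟩
        -- `g` is monic, so the relation for the window starting at `i` determines `v (i + d)`.
        have e1 := hv i (by omega)
        have e2 := hrec i
        have hc : g.coeff d = 1 := by rw [← hgd]; exact hg.coeff_natDegree
        rw [Finset.sum_range_succ, hc, one_mul] at e1 e2
        have e3 : ∑ r ∈ Finset.range d, g.coeff r * v (i + r) =
            ∑ r ∈ Finset.range d, g.coeff r * p.eval (β ^ (i + r)) := by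
          refine Finset.sum_congr rfl fun r hr => ?_
          have := Finset.mem_range.1 hr
          rw [ih (i + r) (by omega) (by omega)]
        rw [e3] at e1
        exact add_left_cancel (e1.trans e2.symm)
  have hp0 : p = 0 := by
    refine eq_zero_of_degree_lt_of_eval_index_eq_zero (s := Z) (v := fun j : ℕ => β ^ j)
      (hβ.mono fun j hj => hZ j hj) (hpdeg.trans_le (by exact_mod_cast hZc)) fun j hj => ?_
    rw [← hvp j (hZ j hj), hvZ j hj]
  intro j hj
  rw [hvp j hj, hp0, eval_zero]

/-- The field of size `2 ^ n` supplies `n` distinct powers of one element. -/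
theorem exists_pow_injOn_galoisField (n : ℕ) (hn : n ≠ 0) :
    ∃ β : GaloisField 2 n, Set.InjOn (fun j : ℕ => β ^ j) (Set.Iio n) := by
  have : Finite (GaloisField 2 n) :=
    Nat.finite_of_card_ne_zero (by rw [GaloisField.card 2 n hn]; positivity)
  obtain ⟨b, hb⟩ := IsCyclic.exists_generator (α := (GaloisField 2 n)ˣ)
  have ho : orderOf b = 2 ^ n - 1 := by
    rw [orderOf_eq_card_of_forall_mem_zpowers hb, Nat.card_units, GaloisField.card 2 n hn]
  have hlt : n < 2 ^ n := Nat.lt_two_pow_self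
  refine ⟨b, fun i hi j hj hij => ?_⟩
  simp only [Set.mem_Iio] at hi hj
  refine pow_injOn_Iio_orderOf (x := b) (Set.mem_Iio.2 (by omega)) (Set.mem_Iio.2 (by omega)) ?_
  exact Units.ext (by simpa using hij)

/-- A message, read through `e` as a field element; indices outside the range carry `0`. -/
def msgVal {F : Type*} [Field F] {m κ : ℕ} (e : F ≃ (Fin κ → Bool))
    (w : Fin m → Fin κ → Bool) (j : ℕ) : F :=
  if h : j < m then e.symm (w ⟨j, h⟩) else 0

/-- To be valid, it suffices that for each user the transcript and the side information
determine `t` further messages. -/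
theorem DecCode.valid_of_determines {m κ t : ℕ} {ι : Type*} {A : ι → Finset (Fin m)}
    (code : DecCode m κ A)
    (h : ∀ j : ι, ∃ D : Finset (Fin m), Disjoint D (A j) ∧ D.card = t ∧
      ∀ w w' : Fin m → Fin κ → Bool, code.X w = code.X w' → (∀ i ∈ A j, w i = w' i) →
        ∀ i ∈ D, w i = w' i) : code.Valid t := by
  classical
  intro j
  obtain ⟨D, hD, hc, hdet⟩ := h j
  refine ⟨D, hD, hc, fun x b i _ =>
    if hx : ∃ w, code.X w = x ∧ (fun i (_ : i ∈ A j) => w i) = b then hx.choose i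
    else fun _ => false, fun w i hi => ?_⟩
  have hx : ∃ w', code.X w' = code.X w ∧
      (fun i (_ : i ∈ A j) => w' i) = (fun i (_ : i ∈ A j) => w i) := ⟨w, rfl, rfl⟩
  simp only [dif_pos hx]
  exact hdet _ _ hx.choose_spec.1
    (fun i hi => congrFun (congrFun hx.choose_spec.2 i) hi) i hi

theorem exists_sparse_mds_code (m t smin smax : ℕ)
    (h1 : smin ≤ smax) (h2 : smax ≤ m - t)
    (h3 : t < m - smin) (h4 : m - smin < smax + t) :
    ∃ κ : ℕ, 1 ≤ κ ∧
      ∃ code : DecCode m κ (fun B : CompleteS m (Finset.Icc smin smax) => B.val),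
        code.Valid t ∧ code.normLen = ((m - smin : ℕ) : ℝ) := by
  classical
  obtain ⟨k, hk⟩ : ∃ k, k = m - smin := ⟨_, rfl⟩
  obtain ⟨d, hd⟩ : ∃ d, d + k = smax + t := ⟨smax + t - k, by omega⟩
  have hd0 : 0 < d := by omega
  obtain ⟨κ, hκ⟩ : ∃ κ, κ = d + k := ⟨_, rfl⟩
  obtain ⟨β, hβ⟩ := exists_pow_injOn_galoisField κ (by omega)
  have hcard : Nat.card (GaloisField 2 κ) = Nat.card (Fin κ → Bool) := by
    rw [GaloisField.card 2 κ (by omega)]; simp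
  have : Finite (GaloisField 2 κ) :=
    Nat.finite_of_card_ne_zero (by rw [GaloisField.card 2 κ (by omega)]; positivity)
  obtain ⟨e⟩ : Nonempty (GaloisField 2 κ ≃ (Fin κ → Bool)) := Finite.card_eq.1 hcard
  let g : Polynomial (GaloisField 2 κ) :=
    ∏ l ∈ Finset.range d, (Polynomial.X - Polynomial.C (β ^ l))
  have hg : g.Monic := Polynomial.monic_prod_X_sub_C _ _
  have hgd : g.natDegree = d := by
    have := Polynomial.natDegree_finsetProd_X_sub_C_eq_card (Finset.range d) (fun l => β ^ l)
    rwa [Finset.card_range] at this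
  have hroot : ∀ l < d, g.eval (β ^ l) = 0 := by
    intro l hl
    rw [Polynomial.eval_prod]
    exact Finset.prod_eq_zero (Finset.mem_range.2 hl) (by simp)
  -- Each window of `d + 1 ≤ smax` messages lies in the side information of some user.
  have hsend : ∀ i : Fin k, ∃ B : CompleteS m (Finset.Icc smin smax),
      ∀ j : Fin m, i.1 ≤ j.1 → j.1 ≤ i.1 + d → j ∈ B.val := by
    intro i
    have hW : (Finset.univ.filter fun j : Fin m => i.1 ≤ j.1 ∧ j.1 ≤ i.1 + d).card ≤ smax := by
      rw [← Finset.card_map Fin.valEmbedding]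
      calc _ ≤ (Finset.Icc i.1 (i.1 + d)).card := by
            refine Finset.card_le_card fun j hj => ?_
            simp only [Finset.mem_map, Finset.mem_filter, Finset.mem_univ, true_and] at hj
            obtain ⟨a, ha, rfl⟩ := hj
            exact Finset.mem_Icc.2 ha
        _ ≤ smax := by rw [Nat.card_Icc]; omega
    obtain ⟨B, hWB, hB⟩ := Finset.exists_superset_card_eq hW (by simp; omega)
    exact ⟨⟨B, by rw [hB]; exact Finset.mem_Icc.2 ⟨h1, le_rfl⟩⟩,
      fun j hj hj' => hWB (by simp [hj, hj'])⟩
  choose send hsend using hsend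
  let code : DecCode m κ (fun B : CompleteS m (Finset.Icc smin smax) => B.val) :=
    { T := k
      sender := send
      c := fun _ => κ
      X := fun w i => e (∑ r ∈ Finset.range (d + 1), g.coeff r * msgVal e w (i + r))
      causal := by
        intro w w' i hw _
        congr 1
        refine Finset.sum_congr rfl fun r hr => ?_
        have hr' := Finset.mem_range.1 hr
        congr 1
        unfold msgVal
        split_ifs with h
        · rw [hw _ (hsend i ⟨i + r, h⟩ (by simp) (by simp; omega))]
        · rfl }
  refine ⟨κ, by omega, code, code.valid_of_determines fun B => ?_, ?_⟩
  · obtain ⟨hBl, hBu⟩ := Finset.mem_Icc.1 B.2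
    let N : Finset (Fin m) := Finset.univ.filter fun j => j.1 < d + k
    have hN : N.card = d + k := by
      rw [← Finset.card_map Fin.valEmbedding, ← Finset.card_range (d + k)]
      congr 1
      ext j
      simp only [N, Finset.mem_map, Finset.mem_filter, Finset.mem_univ, true_and,
        Finset.mem_range, Fin.valEmbedding_apply]
      exact ⟨by rintro ⟨a, ha, rfl⟩; exact ha, fun hj => ⟨⟨j, by omega⟩, hj, rfl⟩⟩
    obtain ⟨D, hDN, hD⟩ := Finset.exists_subset_card_eq (s := N \ B.val) (n := t) (by
      have := Finset.le_card_sdiff B.val N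
      omega)
    refine ⟨D, ?_, hD, fun w w' hX hB i hi => ?_⟩
    · exact Finset.disjoint_left.2 fun x hx => (Finset.mem_sdiff.1 (hDN hx)).2
    have hi' : i.1 < d + k := by
      have := (Finset.mem_sdiff.1 (hDN hi)).1
      simpa [N] using this
    have hZc : d ≤ (N ∩ B.val).card := by
      have e1 := Finset.card_union_add_card_inter N B.val
      have e2 := Finset.card_le_univ (N ∪ B.val)
      rw [Fintype.card_fin] at e2
      omega
    have key := eq_zero_of_window_relations β d k hd0 (hκ ▸ hβ) g hg hgd hroot
      (fun j => msgVal e w j - msgVal e w' j) (by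
        intro a ha
        have h := e.injective (congrFun hX ⟨a, ha⟩)
        simp only [mul_sub, Finset.sum_sub_distrib]
        exact sub_eq_zero.2 h) ((N ∩ B.val).map Fin.valEmbedding)
      (by
        intro j hj
        simp only [N, Finset.mem_map, Finset.mem_inter, Finset.mem_filter] at hj
        obtain ⟨a, ha, rfl⟩ := hj
        exact ha.1.2)
      (by rwa [Finset.card_map])
      (by
        intro j hj
        simp only [Finset.mem_map, Finset.mem_inter] at hj
        obtain ⟨a, ha, rfl⟩ := hj
        simp [msgVal, hB a ha.2]) i.1 hi'
    have := sub_eq_zero.1 key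
    simpa [msgVal] using this
  · have : (κ : ℝ) ≠ 0 := by
      have : κ ≠ 0 := by omega
      exact_mod_cast this
    rw [← hk]
    simp only [DecCode.normLen, code, Finset.sum_const, Finset.card_univ, Fintype.card_fin,
      nsmul_eq_mul]
    field_simp

/-- sparse-MDS achievability: for the decentralized complete–`S`
PICOD(`t`) problem with consecutive `S = [smin : smax]`, `0 ≤ smin ≤ smax ≤ m - t` and
`t < m - smin < smax + t`, there exist a message length `κ ≥ 1` and a valid decentralized
code of normalized length `m - smin`; consequently `ℓ* ≤ m - smin`. -/
theorem decentralized_picod_sparse_mds_achievability (m t smin smax : ℕ) (ht : 1 ≤ t)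
    (h1 : smin ≤ smax) (h2 : smax ≤ m - t)
    (h3 : t < m - smin) (h4 : m - smin < smax + t) :
    (∃ κ : ℕ, 1 ≤ κ ∧
      ∃ code : DecCode m κ (fun B : CompleteS m (Finset.Icc smin smax) => B.val),
        code.Valid t ∧ code.normLen = ((m - smin : ℕ) : ℝ)) ∧
    optLen m t (Finset.Icc smin smax) ≤ ((m - smin : ℕ) : ℝ) := by
  have hex := exists_sparse_mds_code m t smin smax h1 h2 h3 h4
  refine ⟨hex, ?_⟩
  obtain ⟨κ, hκ, code, hv, hl⟩ := hex
  refine csInf_le ⟨0, ?_⟩ ⟨κ, hκ, code, hv, hl.symm⟩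
  rintro r ⟨_, _, _, _, rfl⟩
  exact div_nonneg (Finset.sum_nonneg fun _ _ => Nat.cast_nonneg _) (Nat.cast_nonneg _)
end

section
/- For the decentralized complete–S PICOD(t) problem with m messages and complement-consecutive S = {0,…,s_min−1} ∪ {s_max+1,…,m−t}, where 0 < s_min ≤ s_max < m−t, there exist a message length κ ≥ 1 and a valid decentralized code of normalized length min{ m , |S| + 2t − 2 }, where |S| = s_min + (m − t − s_max); consequently ℓ* ≤ min{ m , |S| + 2t − 2 }. (When s_min − 1 + t < m − t, the code is adaptive: first the messages w_1,…,w_{s_min−1+t} are sent uncoded, satisfying all users with side information size less than s_min and at least one user with side information size m−t; that user, now knowing all m messages, then sends t linearly independent linear combinations of all messages, satisfying all remaining users.) -/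
/-!
The code has `a + k` rounds of one message length each: the first `a` rounds send the messages
`w_0, …, w_{a-1}` uncoded, the last `k` rounds send the power-sum combinations `∑ i, α_i ^ r * w_i`,
`r < k`, where messages are read as elements of the field with `2 ^ m` elements and the `α_i` are
distinct.

* Each uncoded message lies in some side-information set of size `m - t`. As `t ≤ a`, some set of
  size `m - t` contains all of `w_a, …, w_{m-1}`; its owner knows every message after the uncoded
  rounds, so the coded rounds are causal.
* A user with `s` known messages, `s + t ≤ a`, finds `t` new ones among the uncoded ones. A user with
  `m - s ≤ k` unknown messages recovers everything, by the Vandermonde argument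
  `eq_zero_of_power_sums`.

For the bound `|S| + 2t - 2` take `a = smin - 1 + t` and `k = m - smax - 1`: users of size below
`smin` are of the first kind, users of size above `smax` of the second. For the bound `m` take
`a = m` and `k = 0`.
-/

open scoped BigOperators

/-- A vector with at most `k` nonzero entries whose first `k` power sums against distinct nodes
vanish is zero (every `k` columns of a `k`-row Vandermonde matrix are independent). -/
lemma eq_zero_of_power_sums {F : Type*} [Field F] {m k : ℕ} (α : Fin m → F)
    (hα : Function.Injective α) (d : Fin m → F) (B : Finset (Fin m))
    (hB : ∀ i ∈ B, d i = 0) (hk : m ≤ B.card + k)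
    (hd : ∀ r < k, ∑ i, α i ^ r * d i = 0) : d = 0 := by
  classical
  funext j
  by_contra hj
  have hjB : j ∈ Bᶜ := by
    rw [Finset.mem_compl]
    exact fun h => hj (hB j h)
  -- `p` vanishes at every node outside `B` except `α j`, and has degree below `k`.
  set p : Polynomial F :=
    ∏ i ∈ (Bᶜ).erase j, (Polynomial.X - Polynomial.C (α i)) with hp
  have hdeg : p.natDegree < k := by
    rw [hp, Polynomial.natDegree_finsetProd_X_sub_C_eq_card, Finset.card_erase_of_mem hjB,
      Finset.card_compl, Fintype.card_fin]
    have := Finset.card_pos.mpr ⟨j, hjB⟩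
    rw [Finset.card_compl, Fintype.card_fin] at this
    omega
  have hzero : ∑ i, p.eval (α i) * d i = 0 := by
    simp_rw [Polynomial.eval_eq_sum_range' hdeg, Finset.sum_mul]
    rw [Finset.sum_comm]
    refine Finset.sum_eq_zero fun r hr => ?_
    simp_rw [mul_assoc]
    rw [← Finset.mul_sum, hd r (Finset.mem_range.mp hr), mul_zero]
  rw [Finset.sum_eq_single j] at hzero
  · refine (mul_ne_zero ?_ hj) hzero
    rw [hp, Polynomial.eval_prod, Finset.prod_ne_zero_iff]
    intro i hi
    rw [Polynomial.eval_sub, Polynomial.eval_X, Polynomial.eval_C, sub_ne_zero]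
    exact fun h => (Finset.mem_erase.mp hi).1 (hα h).symm
  · intro i _ hij
    by_cases hiB : i ∈ B
    · rw [hB i hiB, mul_zero]
    · have : p.eval (α i) = 0 := by
        rw [hp, Polynomial.eval_prod]
        refine Finset.prod_eq_zero (i := i) ?_ (by simp)
        exact Finset.mem_erase.mpr ⟨hij, Finset.mem_compl.mpr hiB⟩
      rw [this, zero_mul]
  · simp

/-- Decoders exist as soon as the transcript and the side information determine the demanded
messages. -/
lemma DecCode.valid_of_determined {m κ t : ℕ} {ι : Type*} {A : ι → Finset (Fin m)}
    (code : DecCode m κ A)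
    (h : ∀ j, ∃ D : Finset (Fin m), Disjoint D (A j) ∧ D.card = t ∧
      ∀ w w' : Fin m → Fin κ → Bool, code.X w = code.X w' → (∀ i ∈ A j, w i = w' i) →
        ∀ i ∈ D, w i = w' i) : code.Valid t := by
  classical
  intro j
  obtain ⟨D, hD, hc, hw⟩ := h j
  refine ⟨D, hD, hc, fun x s i _ => if hx : ∃ w : Fin m → Fin κ → Bool,
    code.X w = x ∧ (fun (i : Fin m) (_ : i ∈ A j) => w i) = s then hx.choose i else default, ?_⟩
  intro w i hi
  have hx : ∃ v : Fin m → Fin κ → Bool, code.X v = code.X w ∧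
      (fun (i : Fin m) (_ : i ∈ A j) => v i) = fun i _ => w i := ⟨w, rfl, rfl⟩
  dsimp only
  rw [dif_pos hx]
  refine hw _ _ hx.choose_spec.1 (fun i hi => ?_) i hi
  exact congrFun (congrFun hx.choose_spec.2 i) hi

/-- The code with `a` uncoded rounds followed by `k` rounds of power-sum combinations: it serves
every user whose number `s` of known messages satisfies `s + t ≤ a`, or `s + t ≤ m ≤ s + k`. -/
lemma exists_uncoded_then_power_sums (m t a k : ℕ) (S : Finset ℕ) (htm : t < m) (hta : t ≤ a)
    (ham : a ≤ m) (hmt : m - t ∈ S)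
    (hS : ∀ s ∈ S, s + t ≤ a ∨ (s + t ≤ m ∧ m ≤ s + k)) :
    ∃ code : DecCode m m (fun B : CompleteS m S => B.val),
      code.Valid t ∧ code.normLen = ((a + k : ℕ) : ℝ) := by
  classical
  have hm : m ≠ 0 := by omega
  have : Fintype (GaloisField 2 m) := Fintype.ofFinite _
  have hcard : Fintype.card (GaloisField 2 m) = 2 ^ m := by
    rw [← Nat.card_eq_fintype_card, GaloisField.card 2 m hm]
  obtain ⟨e⟩ : Nonempty ((Fin m → Bool) ≃ GaloisField 2 m) := by
    refine Fintype.card_eq.mp ?_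
    rw [hcard]
    simp
  obtain ⟨α⟩ : Nonempty (Fin m ↪ GaloisField 2 m) := by
    refine Function.Embedding.nonempty_of_card_le ?_
    rw [hcard, Fintype.card_fin]
    exact Nat.lt_two_pow_self.le
  have extend : ∀ C : Finset (Fin m), C.card ≤ m - t →
      ∃ B : CompleteS m S, C ⊆ B.val := by
    intro C hC
    obtain ⟨B, hCB, hB⟩ := Finset.exists_superset_card_eq hC (by simp)
    exact ⟨⟨B, by rw [hB]; exact hmt⟩, hCB⟩
  have hlow : (Finset.univ.filter fun i : Fin m => i.val < a).card = a := by
    rw [Fin.card_filter_val_lt]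
    omega
  have hhigh : (Finset.univ.filter fun i : Fin m => ¬ i.val < a).card ≤ m - t := by
    have := Finset.card_filter_add_card_filter_not (s := (Finset.univ : Finset (Fin m)))
      (fun i : Fin m => i.val < a)
    rw [hlow, Finset.card_univ, Fintype.card_fin] at this
    omega
  have hsend : ∀ τ : Fin (a + k), ∃ B : CompleteS m S,
      if h : τ.val < a then (⟨τ.val, by omega⟩ : Fin m) ∈ B.val
      else ∀ i : Fin m, ¬ i.val < a → i ∈ B.val := by
    intro τ
    split_ifs with h
    · obtain ⟨B, hB⟩ := extend {⟨τ.val, by omega⟩} (by rw [Finset.card_singleton]; omega)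
      exact ⟨B, hB (Finset.mem_singleton_self _)⟩
    · obtain ⟨B, hB⟩ := extend _ hhigh
      exact ⟨B, fun i hi => hB (by simpa using hi)⟩
  choose sender hsender using hsend
  let enc : (Fin m → Fin m → Bool) → Fin (a + k) → Fin m → Bool := fun w τ =>
    if h : τ.val < a then w ⟨τ.val, by omega⟩
    else e.symm (∑ i, α i ^ (τ.val - a) * e (w i))
  have enc_low : ∀ w (i : Fin m) (h : i.val < a), enc w ⟨i.val, by omega⟩ = w i :=
    fun w i h => dif_pos h
  let code : DecCode m m (fun B : CompleteS m S => B.val) :=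
    { T := a + k
      sender := sender
      c := fun _ => m
      X := enc
      causal := by
        intro w w' τ hA hprev
        have hs := hsender τ
        by_cases h : τ.val < a
        · rw [dif_pos h] at hs
          simp only [enc, dif_pos h]
          exact hA _ hs
        · rw [dif_neg h] at hs
          have hww : w = w' := by
            funext i
            by_cases hi : i.val < a
            · rw [← enc_low w i hi, ← enc_low w' i hi]
              exact hprev _ (Fin.lt_def.mpr (by dsimp only; omega))
            · exact hA i (hs i hi)
          rw [hww] }
  refine ⟨code, code.valid_of_determined ?_, ?_⟩
  · intro B
    rcases hS _ B.property with h | ⟨h, h'⟩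
    · have hle : t ≤ ((Finset.univ.filter fun i : Fin m => i.val < a) \ B.val).card := by
        have := Finset.le_card_sdiff B.val (Finset.univ.filter fun i : Fin m => i.val < a)
        rw [hlow] at this
        omega
      obtain ⟨D, hD, hDc⟩ := Finset.exists_subset_card_eq hle
      refine ⟨D, Finset.disjoint_of_subset_left hD Finset.sdiff_disjoint, hDc, ?_⟩
      intro w w' hX _ i hi
      have hia : i.val < a := by
        have := (Finset.mem_sdiff.mp (hD hi)).1
        simpa using this
      rw [← enc_low w i hia, ← enc_low w' i hia]
      exact congrFun hX _
    · have hle : t ≤ ((B.val)ᶜ).card := by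
        rw [Finset.card_compl, Fintype.card_fin]
        omega
      obtain ⟨D, hD, hDc⟩ := Finset.exists_subset_card_eq hle
      refine ⟨D, Finset.disjoint_of_subset_left hD disjoint_compl_left, hDc, ?_⟩
      intro w w' hX hA i _
      have hz : (fun i => e (w i) - e (w' i)) = 0 := by
        refine eq_zero_of_power_sums α α.injective _ B.val ?_ h' ?_
        · intro i hi
          rw [hA i hi, sub_self]
        · intro r hr
          have hround : enc w ⟨a + r, by omega⟩ = enc w' ⟨a + r, by omega⟩ := congrFun hX _
          have hna : ¬ a + r < a := by omega
          simp only [enc, dif_neg hna, Nat.add_sub_cancel_left] at hround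
          simp_rw [mul_sub]
          rw [Finset.sum_sub_distrib, e.symm.injective hround, sub_self]
      exact e.injective (sub_eq_zero.mp (congrFun hz i))
  · have hm' : (m : ℝ) ≠ 0 := by exact_mod_cast hm
    change (∑ _τ : Fin (a + k), (m : ℝ)) / m = _
    rw [Finset.sum_const, Finset.card_univ, Fintype.card_fin, nsmul_eq_mul,
      mul_div_cancel_right₀ _ hm']

lemma DecCode.optLen_le {m κ t : ℕ} {S : Finset ℕ} (hκ : 1 ≤ κ)
    (code : DecCode m κ (fun B : CompleteS m S => B.val)) (h : code.Valid t) :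
    optLen m t S ≤ code.normLen := by
  refine csInf_le ⟨0, ?_⟩ ⟨κ, hκ, code, h, rfl⟩
  rintro _ ⟨κ', _, code', _, rfl⟩
  exact div_nonneg (Finset.sum_nonneg fun _ _ => Nat.cast_nonneg _) (Nat.cast_nonneg _)

/-- achievability for complement-consecutive `S`: for the decentralized
complete–`S` PICOD(`t`) problem with `S = [0 : smin - 1] ∪ [smax + 1 : m - t]`,
`0 < smin ≤ smax < m - t`, there exist a message length `κ ≥ 1` and a valid decentralized
code of normalized length `min m (|S| + 2t - 2)`, where `|S| = smin + (m - t - smax)`;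
consequently `ℓ* ≤ min m (|S| + 2t - 2)`. -/
theorem decentralized_picod_complement_consecutive_achievability
    (m t smin smax : ℕ) (ht : 1 ≤ t)
    (h1 : 0 < smin) (h2 : smin ≤ smax) (h3 : smax < m - t) :
    (∃ κ : ℕ, 1 ≤ κ ∧
      ∃ code : DecCode m κ
          (fun B : CompleteS m (Finset.range smin ∪ Finset.Icc (smax + 1) (m - t)) => B.val),
        code.Valid t ∧
        code.normLen = ((min m (smin + (m - t - smax) + 2 * t - 2) : ℕ) : ℝ)) ∧
    optLen m t (Finset.range smin ∪ Finset.Icc (smax + 1) (m - t)) ≤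
      ((min m (smin + (m - t - smax) + 2 * t - 2) : ℕ) : ℝ) := by
  have key : ∃ code : DecCode m m
      (fun B : CompleteS m (Finset.range smin ∪ Finset.Icc (smax + 1) (m - t)) => B.val),
      code.Valid t ∧
      code.normLen = ((min m (smin + (m - t - smax) + 2 * t - 2) : ℕ) : ℝ) := by
    have hmt : m - t ∈ Finset.range smin ∪ Finset.Icc (smax + 1) (m - t) := by
      simp only [Finset.mem_union, Finset.mem_range, Finset.mem_Icc]
      omega
    rcases le_total m (smin + (m - t - smax) + 2 * t - 2) with h | h
    · rw [min_eq_left h]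
      refine exists_uncoded_then_power_sums m t m 0 _ (by omega) (by omega) le_rfl hmt ?_
      intro s hs
      simp only [Finset.mem_union, Finset.mem_range, Finset.mem_Icc] at hs
      omega
    · rw [min_eq_right h]
      have hlen : smin + (m - t - smax) + 2 * t - 2 = (smin - 1 + t) + (m - smax - 1) := by
        omega
      rw [hlen]
      refine exists_uncoded_then_power_sums m t _ _ _ (by omega) (by omega) (by omega) hmt ?_
      intro s hs
      simp only [Finset.mem_union, Finset.mem_range, Finset.mem_Icc] at hs
      omega
  obtain ⟨code, hv, hl⟩ := key
  have hm : 1 ≤ m := by omega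
  exact ⟨⟨m, hm, code, hv, hl⟩, hl ▸ code.optLen_le hm hv⟩
end
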